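/- arXiv:2603.05973 — 6 statements merged into one kernel-verified Lean document; each statement's English description precedes it below -/
import Mathlib

section
/- Let k ≥ 3 and r ≥ 2k−1 be integers with k not dividing r. Then the k-uniform tight cycle C_r^{(k)} has no (k−1)-vanishing order. -/
/-! Two consecutive edges `e_n`, `e_{n+1}` of the tight cycle share the `(k-1)`-set
`X = {n+1, …, n+k-1}`. The colour of `X` must be the set of positions of `X` in both edges, so
every vertex of `X` has the same rank in `e_n` as in `e_{n+1}`, and the vertex `n` has the same
rank in `e_n` as the vertex `n+k` in `e_{n+1}` (`rank_exchange`). Hence a vertex has the same rank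
in all edges through it, and this rank `p` satisfies `p (n + k) = p n`, where `p` is also
`r`-periodic. So `p d = p 0` for `d = gcd k r`. But `0 < d < k` because `k ∤ r`, so `0` and `d` are
distinct vertices of the edge `e_0` and cannot have the same rank in it. -/

open Finset Filter

variable {α : Type*} {β : Type*}

/-- `(V, E)` is a `k`-uniform hypergraph: every edge is a `k`-element subset of `V`. -/
def IsKGraph [DecidableEq α] (k : ℕ) (V : Finset α) (E : Finset (Finset α)) : Prop :=
  ∀ e ∈ E, e ⊆ V ∧ e.card = k

/-- The degree of a vertex set `S`: the number of edges containing `S`. -/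
def degS [DecidableEq α] (E : Finset (Finset α)) (S : Finset α) : ℕ :=
  (E.filter fun e => S ⊆ e).card

/-- The minimum `ℓ`-degree of a hypergraph: the minimum of `degS` over `ℓ`-subsets of `V`. -/
noncomputable def minDeg [DecidableEq α] (ℓ : ℕ) (V : Finset α) (E : Finset (Finset α)) : ℕ :=
  sInf {d | ∃ S ⊆ V, S.card = ℓ ∧ d = degS E S}

/-- The edge set of the link of `S`: `{e \ S : S ⊆ e ∈ E}`. -/
def linkE [DecidableEq α] (E : Finset (Finset α)) (S : Finset α) : Finset (Finset α) :=
  (E.filter fun e => S ⊆ e).image fun e => e \ S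

/-- The rank (1-based position) of `x` within `T` with respect to `σ`. -/
def rankIn (T : Finset α) (σ : α → ℕ) (x : α) : ℕ :=
  (T.filter fun y => σ y ≤ σ x).card

/-- `σ` is an ordering of `V`, i.e. a bijection `V → {1, …, |V|}`. -/
def IsOrdering (V : Finset α) (σ : α → ℕ) : Prop :=
  Set.BijOn σ ↑V (Set.Icc 1 V.card)

/-- `σ` is an `ℓ`-vanishing order of the `k`-graph `(V, E)`: it is an ordering of `V` and there
is a coloring `φ` of `ℓ`-sets of vertices such that for every edge `e` and every `ℓ`-subset `X`
of `e`, `φ X` equals the set of positions that `X` occupies inside `e` under `σ`. -/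
def IsVanishingOrder [DecidableEq α] (ℓ : ℕ) (V : Finset α) (E : Finset (Finset α))
    (σ : α → ℕ) : Prop :=
  IsOrdering V σ ∧
    ∃ φ : Finset α → Finset ℕ,
      ∀ e ∈ E, ∀ X ⊆ e, X.card = ℓ → φ X = X.image (rankIn e σ)

/-- The hypergraph `(VH, EH)` contains a copy of `(VF, EF)`. -/
def ContainsCopy [DecidableEq α] [DecidableEq β] (VF : Finset α) (EF : Finset (Finset α))
    (VH : Finset β) (EH : Finset (Finset β)) : Prop :=
  ∃ f : α → β, Set.InjOn f ↑VF ∧ (∀ v ∈ VF, f v ∈ VH) ∧ ∀ e ∈ EF, e.image f ∈ EH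

/-- `ex_ℓ(n, F)`: the maximum of `δ_ℓ(H)` over all `F`-free `k`-graphs `H` on `n` vertices. -/
noncomputable def exDeg [DecidableEq α] (k ℓ n : ℕ) (VF : Finset α)
    (EF : Finset (Finset α)) : ℕ :=
  sSup {d | ∃ E : Finset (Finset (Fin n)), (∀ e ∈ E, e.card = k) ∧
    ¬ ContainsCopy VF EF (Finset.univ : Finset (Fin n)) E ∧ d = minDeg ℓ Finset.univ E}

/-- The `ℓ`-degree Turán density of the `k`-graph `F = (VF, EF)` equals `x`, i.e.
`ex_ℓ(n, F) / C(n-ℓ, k-ℓ) → x` as `n → ∞` (this limit is known to exist). -/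
def HasTuranDensity [DecidableEq α] (k ℓ : ℕ) (VF : Finset α) (EF : Finset (Finset α))
    (x : ℝ) : Prop :=
  Tendsto (fun n : ℕ => (exDeg k ℓ n VF EF : ℝ) / ((n - ℓ).choose (k - ℓ) : ℝ)) atTop (nhds x)

/-- The `t`-uniform hypergraph `(V, E)` is `t`-partite: the vertices can be split into `t`
parts so that every edge contains exactly one vertex from each part. -/
def IsPartite (t : ℕ) (V : Finset α) (E : Finset (Finset α)) : Prop :=
  ∃ P : α → Fin t, ∀ e ∈ E, ∀ i : Fin t, (e.filter fun v => P v = i).card = 1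

/-- The edge set of the `k`-uniform tight cycle of length `r`, on the vertex set `range r`
(vertex `v_i` is `i - 1`): the edges are `{i, i+1, …, i+k-1}` with indices modulo `r`. -/
def cycleE (k r : ℕ) : Finset (Finset ℕ) :=
  (range r).image fun i => (range k).image fun t => (i + t) % r

lemma rankIn_lt {T : Finset α} {σ : α → ℕ} {x y : α} (hy : y ∈ T) (h : σ x < σ y) :
    rankIn T σ x < rankIn T σ y := by
  unfold rankIn
  apply Finset.card_lt_card
  refine ⟨fun z hz => ?_, fun hs => ?_⟩
  · simp only [mem_filter] at hz ⊢
    exact ⟨hz.1, by omega⟩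
  · have := hs (mem_filter.2 ⟨hy, le_rfl⟩)
    simp only [mem_filter] at this
    omega

lemma rankIn_le_iff {T : Finset α} {σ : α → ℕ} {x y : α} (hx : x ∈ T)
    (hinj : Set.InjOn σ T) (hy : y ∈ T) : rankIn T σ x ≤ rankIn T σ y ↔ σ x ≤ σ y := by
  constructor
  · intro h
    by_contra! hc
    have := rankIn_lt hx hc
    omega
  · intro h
    rcases h.lt_or_eq with h | h
    · exact (rankIn_lt hy h).le
    · rw [hinj hx hy h]

lemma rankIn_injOn {T : Finset α} {σ : α → ℕ} (hinj : Set.InjOn σ T) :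
    Set.InjOn (rankIn T σ) T := by
  intro x hx y hy h
  have h1 := (rankIn_le_iff hx hinj hy).1 h.le
  have h2 := (rankIn_le_iff hy hinj hx).1 h.ge
  exact hinj hx hy (le_antisymm h1 h2)

lemma rankIn_insert [DecidableEq α] {X : Finset α} {σ : α → ℕ} {a x : α} (ha : a ∉ X) :
    rankIn (insert a X) σ x = rankIn X σ x + if σ a ≤ σ x then 1 else 0 := by
  unfold rankIn
  rw [filter_insert]
  split_ifs with h
  · rw [card_insert_of_notMem (by simp [ha])]
  · rfl

/-- The rank inside `X` can be recovered from the set of positions of `X` in `T`. -/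
lemma card_filter_image_rankIn [DecidableEq α] {X T : Finset α} {σ : α → ℕ} (hXT : X ⊆ T)
    (hinj : Set.InjOn σ T) {x : α} (hx : x ∈ X) :
    ((X.image (rankIn T σ)).filter fun z => z ≤ rankIn T σ x).card = rankIn X σ x := by
  rw [filter_image, card_image_of_injOn]
  · unfold rankIn
    congr 1
    apply filter_congr
    intro y hy
    exact rankIn_le_iff (hXT hy) hinj (hXT hx)
  · intro y hy z hz h
    exact rankIn_injOn hinj (hXT (mem_filter.1 hy).1) (hXT (mem_filter.1 hz).1) h

/-- If `X` occupies the same positions in `X ∪ {a}` and in `X ∪ {b}`, then `a` and `b` lie in the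
same gap of `X`, so replacing `a` by `b` changes no rank. -/
lemma rank_exchange [DecidableEq α] {X : Finset α} {σ : α → ℕ} {a b : α} (ha : a ∉ X) (hb : b ∉ X)
    (hia : Set.InjOn σ (insert a X : Finset α)) (hib : Set.InjOn σ (insert b X : Finset α))
    (him : X.image (rankIn (insert a X) σ) = X.image (rankIn (insert b X) σ)) :
    (∀ x ∈ X, rankIn (insert a X) σ x = rankIn (insert b X) σ x) ∧
      rankIn (insert a X) σ a = rankIn (insert b X) σ b := by
  have hX : ∀ x ∈ X, rankIn (insert a X) σ x = rankIn (insert b X) σ x := by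
    intro x hx
    have hmem : rankIn (insert a X) σ x ∈ X.image (rankIn (insert b X) σ) := by
      rw [← him]; exact mem_image_of_mem _ hx
    obtain ⟨y, hy, hyx⟩ := mem_image.1 hmem
    have h1 := card_filter_image_rankIn (subset_insert a X) hia hx
    have h2 := card_filter_image_rankIn (subset_insert b X) hib hy
    rw [him, ← hyx, h2] at h1
    have hiX : Set.InjOn σ X := hia.mono (by simp)
    rw [← hyx, rankIn_injOn hiX hy hx h1]
  refine ⟨hX, ?_⟩
  rw [rankIn_insert ha, rankIn_insert hb]
  simp only [le_refl, if_true, Nat.add_right_cancel_iff]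
  unfold rankIn
  congr 1
  apply filter_congr
  intro y hy
  have h := hX y hy
  rw [rankIn_insert ha, rankIn_insert hb] at h
  have hya : σ y ≠ σ a := fun h => ha (hia (by simp [hy]) (by simp) h ▸ hy)
  have hyb : σ y ≠ σ b := fun h => hb (hib (by simp [hy]) (by simp) h ▸ hy)
  split_ifs at h <;> omega

/-- The edge of the tight cycle starting at the vertex `n % r`, for arbitrary `n`. -/
def cycEdge (k r n : ℕ) : Finset ℕ := (range k).image fun t => (n + t) % r

lemma cycEdge_mod (k r n : ℕ) : cycEdge k r (n % r) = cycEdge k r n := by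
  simp [cycEdge]

lemma cycEdge_mem {k r : ℕ} (hr : 0 < r) (n : ℕ) : cycEdge k r n ∈ cycleE k r :=
  mem_image.2 ⟨n % r, mem_range.2 (Nat.mod_lt _ hr), cycEdge_mod k r n⟩

/-- Vertices at cyclic offsets below `r` are distinct. -/
lemma offset_inj {r n s t : ℕ} (hs : s < r) (ht : t < r) (h : (n + s) % r = (n + t) % r) :
    s = t := by
  have h' : s ≡ t [MOD r] := Nat.ModEq.add_left_cancel' n h
  exact Nat.ModEq.eq_of_lt_of_lt h' hs ht

/-- For `k ≥ 3` and `r ≥ 2k - 1` with `k ∤ r`, the tight cycle `C_r^{(k)}` has no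
`(k-1)`-vanishing order. -/
theorem stmt_10 (k r : ℕ) (hk : 3 ≤ k) (hr : 2 * k - 1 ≤ r) (hdvd : ¬ k ∣ r) :
    ¬ ∃ σ : ℕ → ℕ, IsVanishingOrder (k - 1) (range r) (cycleE k r) σ := by
  rintro ⟨σ, hord, φ, hφ⟩
  have hkr : k < r := by omega
  have hr0 : 0 < r := by omega
  have hinj : ∀ n, Set.InjOn σ (cycEdge k r n) := by
    intro n
    refine hord.injOn.mono ?_
    intro x hx
    obtain ⟨t, -, rfl⟩ := mem_image.1 (mem_coe.1 hx)
    simpa using Nat.mod_lt _ hr0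
  -- Comparison of the ranks in the consecutive edges starting at `n` and `n + 1`.
  have key : ∀ n, (∀ t, t + 1 < k → rankIn (cycEdge k r n) σ ((n + (t + 1)) % r) =
        rankIn (cycEdge k r (n + 1)) σ ((n + (t + 1)) % r)) ∧
      rankIn (cycEdge k r n) σ (n % r) = rankIn (cycEdge k r (n + 1)) σ ((n + k) % r) := by
    intro n
    let X : Finset ℕ := (range (k - 1)).image fun t => (n + (t + 1)) % r
    have hcard : X.card = k - 1 := by
      rw [card_image_of_injOn, card_range]
      intro s hs t ht h
      simp only [coe_range, Set.mem_Iio] at hs ht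
      have := offset_inj (by omega) (by omega) h
      omega
    have ha : n % r ∉ X := by
      intro h
      obtain ⟨t, ht, h⟩ := mem_image.1 h
      have ht := mem_range.1 ht
      have := offset_inj (n := n) (s := t + 1) (t := 0) (by omega) (by omega) h
      omega
    have hb : (n + k) % r ∉ X := by
      intro h
      obtain ⟨t, ht, h⟩ := mem_image.1 h
      have ht := mem_range.1 ht
      have := offset_inj (by omega) (by omega) h
      omega
    have hEa : cycEdge k r n = insert (n % r) X := by
      obtain ⟨m, rfl⟩ : ∃ m, k = m + 1 := ⟨k - 1, by omega⟩
      simp only [cycEdge, X, range_add_one', Nat.add_sub_cancel]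
      simp [image_insert, Finset.map_eq_image, image_image, Function.comp_def]
      rfl
    have hEb : cycEdge k r (n + 1) = insert ((n + k) % r) X := by
      obtain ⟨m, rfl⟩ : ∃ m, k = m + 1 := ⟨k - 1, by omega⟩
      simp only [cycEdge, X, range_add_one, Nat.add_sub_cancel, image_insert]
      simp only [add_assoc, add_comm 1]
    have him : X.image (rankIn (insert (n % r) X) σ) =
        X.image (rankIn (insert ((n + k) % r) X) σ) := by
      rw [← hφ _ (hEa ▸ cycEdge_mem hr0 n) X (subset_insert _ _) hcard,
        ← hφ _ (hEb ▸ cycEdge_mem hr0 (n + 1)) X (subset_insert _ _) hcard]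
    have := rank_exchange ha hb (hEa ▸ hinj n) (hEb ▸ hinj (n + 1)) him
    rw [hEa, hEb]
    refine ⟨fun t ht => this.1 _ ?_, this.2⟩
    exact mem_image.2 ⟨t, mem_range.2 (by omega), rfl⟩
  -- The rank of a vertex in the edge starting at it equals its rank in every edge through it.
  have hconst : ∀ t n, t < k →
      rankIn (cycEdge k r n) σ ((n + t) % r) = rankIn (cycEdge k r (n + t)) σ ((n + t) % r) := by
    intro t
    induction t with
    | zero => intro n _; rfl
    | succ t ih =>
      intro n ht
      rw [(key n).1 t ht]
      have := ih (n + 1) (by omega)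
      rwa [show n + 1 + t = n + (t + 1) by omega] at this
  let p : ℕ → ℕ := fun n => rankIn (cycEdge k r n) σ (n % r)
  have hpk : ∀ n, p (n + k) = p n := by
    intro n
    have h1 := (key n).2
    have h2 := hconst (k - 1) (n + 1) (by omega)
    rw [show n + 1 + (k - 1) = n + k by omega] at h2
    exact (h1.trans h2).symm
  have hpmul : ∀ m, p (k * m) = p 0 := by
    intro m
    induction m with
    | zero => rfl
    | succ m ih => rw [Nat.mul_succ, hpk, ih]
  have hpmod : ∀ n, p (n % r) = p n := by
    intro n
    simp only [p, cycEdge_mod, Nat.mod_mod]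
  have hd0 : 0 < Nat.gcd k r := Nat.gcd_pos_of_pos_right _ hr0
  have hdk : Nat.gcd k r < k := by
    refine lt_of_le_of_ne (Nat.gcd_le_left _ (by omega)) fun h => hdvd ?_
    exact Nat.gcd_eq_left_iff_dvd.1 h
  obtain ⟨m, -, hm⟩ := Nat.exists_mul_mod_eq_gcd (n := k) (k := r) (hdk.trans hkr)
  have hpd : p (Nat.gcd k r) = p 0 := by rw [← hm, hpmod, hpmul]
  have h0 := hconst (Nat.gcd k r) 0 hdk
  have heq : rankIn (cycEdge k r 0) σ ((0 + Nat.gcd k r) % r) =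
      rankIn (cycEdge k r 0) σ ((0 + 0) % r) := by
    rw [h0]
    simpa [p] using hpd
  have := rankIn_injOn (hinj 0) (mem_coe.2 (mem_image.2 ⟨_, mem_range.2 hdk, rfl⟩))
    (mem_coe.2 (mem_image.2 ⟨0, mem_range.2 (by omega), rfl⟩)) heq
  have := offset_inj (by omega) hr0 this
  omega
end

section
/- For all integers k ≥ 4 and m ≥ 1, there exists γ > 0 such that for every n_0 there is a k-graph H on more than n_0 vertices satisfying: (1) δ_2(H) ≥ γ·|V(H)|^{k−2}, and (2) every subhypergraph of H on at most m vertices admits a 2-vanishing order. -/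
/-!
The vertices are spread over a cycle of `N > m` arcs. Any `m` of them miss an arc, at which the
cycle can be cut to become a line. An edge consists of two centres `x`, `y` and `n = k - 2` leaves.
Its type `(t, J)` records an arc `t` and the distinct arcs `J` of the leaves, which avoid `t - 1`,
`t`, `t + 1`. The centres lie on `(t, t)`, `(t - 1, t)` or `(t, t + 1)`. If the cycle is cut at an
arc which the edge misses, the order of the vertices along the line puts `x` directly before `y`
and so depends on the type only. Hence it suffices that every pair of vertices determines the type
of the edges containing it and the roles it plays in them (`Good.role_unique`); then the order
along the line is `2`-vanishing (`exists_vanishing`).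

Every pair of vertices carries a type of its own, and all pairs in an edge must have the type of
the edge. The arcs then determine the roles, except that a vertex on `t` may be `x` or `y`. This is
settled by a bit which the centre on `t` reads off each leaf (`0` for `x`, `1` for `y`), and, if
both centres lie on `t`, by a fixed numbering of the vertices. The three placements are what makes
every pair degree positive: a pair of a centre on `t` and a leaf with bit `0` is in edges with `y`
on `t + 1`, and one with bit `1` is in edges with `x` on `t - 1`.

Extending a given pair to edges requires new vertices for which all pairs have the type of the
given one. To this end each vertex has a priority in a tournament on `7` elements in which any two
elements are beaten by a common one, and a preferred type towards each arc; the vertex of winning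
priority imposes its preference (`extend_typ`). This involves a bounded amount of data. The bits
are scalar products of nonzero vectors in `𝔽₂ᵉ⁺³`, shifted by tests depending on bounded data
(`exists_tests`). A new vector has at most two linear conditions to satisfy, and the shifts are
used to make these compatible. So there are at least `2 ^ e` choices for each of the `n` new
vertices (`le_degS_pair`), whereas the number of vertices is less than a constant multiple of
`2 ^ e` (`card_Vtx`, `card_Wt`).
-/

open Finset Filter

variable {α : Type*} {β : Type*}

namespace VanishingOrder

/-! ### Linear conditions over `𝔽₂` -/

/-- The nonzero vectors of `𝔽₂ᵈ`. -/
abbrev Wt (d : ℕ) := {w : Fin d → ZMod 2 // w ≠ 0}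

/-- The scalar product of `𝔽₂ᵈ`, restricted to nonzero vectors. -/
abbrev dot {d : ℕ} (a b : Wt d) : ZMod 2 := a.1 ⬝ᵥ b.1

theorem zmod2_cases (b : ZMod 2) : b = 0 ∨ b = 1 := by
  revert b; decide

theorem exists_dot_eq_one {d : ℕ} (a : Wt d) : ∃ w : Fin d → ZMod 2, a.1 ⬝ᵥ w = 1 := by
  obtain ⟨i, hi⟩ := Function.ne_iff.mp a.2
  refine ⟨Pi.single i 1, ?_⟩
  rw [dotProduct_single, mul_one]
  exact (zmod2_cases _).resolve_left hi

theorem exists_dot_zero_one {d : ℕ} {a b : Wt d} (hab : a ≠ b) :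
    ∃ w : Fin d → ZMod 2, a.1 ⬝ᵥ w = 0 ∧ b.1 ⬝ᵥ w = 1 := by
  by_cases h : ∃ i, a.1 i = 0 ∧ b.1 i = 1
  · obtain ⟨i, h0, h1⟩ := h
    exact ⟨Pi.single i 1, by simp [h0], by simp [h1]⟩
  · push Not at h
    obtain ⟨j, hj⟩ := Function.ne_iff.mp b.2
    have hj1 : b.1 j = 1 := (zmod2_cases _).resolve_left hj
    have haj : a.1 j = 1 := (zmod2_cases _).resolve_left fun h0 => h j h0 hj1
    obtain ⟨i, hi⟩ := Function.ne_iff.mp (fun h' => hab (Subtype.ext h') : a.1 ≠ b.1)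
    have hai : a.1 i = 1 := (zmod2_cases _).resolve_left fun h0 =>
      h i h0 ((zmod2_cases _).resolve_left fun h1 => hi (h0.trans h1.symm))
    have hbi : b.1 i = 0 := (zmod2_cases _).resolve_right fun h1 => hi (hai.trans h1.symm)
    refine ⟨Pi.single i 1 + Pi.single j 1, ?_, ?_⟩
    · simp [dotProduct_add, hai, haj]; decide
    · simp [dotProduct_add, hbi, hj1]

/-- Two linear conditions on `𝔽₂ᵉ⁺³` with a common solution have at least `2 ^ (e + 1)` of them,
hence at least `2 ^ e` nonzero ones. -/
theorem count_of_mem {e : ℕ} (a b : Wt (e + 3)) (p q : ZMod 2)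
    (h : ∃ w : Fin (e + 3) → ZMod 2, a.1 ⬝ᵥ w = p ∧ b.1 ⬝ᵥ w = q) :
    2 ^ e ≤ #{w : Wt (e + 3) | dot a w = p ∧ dot b w = q} := by
  classical
  obtain ⟨w₀, h₁, h₂⟩ := h
  set F : Finset (Fin (e + 3) → ZMod 2) := {w | a.1 ⬝ᵥ w = p ∧ b.1 ⬝ᵥ w = q} with hF
  have hfib : ∀ y ∈ (univ : Finset (ZMod 2 × ZMod 2)),
      #{w ∈ (univ : Finset (Fin (e + 3) → ZMod 2)) | (a.1 ⬝ᵥ w, b.1 ⬝ᵥ w) = y} ≤ #F := by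
    intro y _
    by_cases hy : ∃ w₁ : Fin (e + 3) → ZMod 2, (a.1 ⬝ᵥ w₁, b.1 ⬝ᵥ w₁) = y
    · obtain ⟨w₁, rfl⟩ := hy
      refine card_le_card_of_injOn (fun w => w - w₁ + w₀) ?_ ?_
      · intro w hw
        simp only [coe_filter, mem_univ, true_and, Set.mem_ofPred_eq, Prod.mk.injEq] at hw
        simp [hF, dotProduct_add, dotProduct_sub, hw.1, hw.2, h₁, h₂]
      · intro w _ w' _ h
        simpa using h
    · push Not at hy
      rw [filter_false_of_mem (fun w _ => hy w)]
      simp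
  have hcard := card_le_mul_card_image_of_maps_to
    (f := fun w : Fin (e + 3) → ZMod 2 => (a.1 ⬝ᵥ w, b.1 ⬝ᵥ w))
    (s := univ) (t := univ) (fun _ _ => mem_univ _) (#F) hfib
  have h4 : 2 ^ e * 2 ≤ #F := by
    have h4 : #(univ : Finset (ZMod 2 × ZMod 2)) = 4 := by decide
    rw [h4] at hcard
    simp [ZMod.card, pow_succ] at hcard
    omega
  have hle : #F ≤ #{w : Wt (e + 3) | dot a w = p ∧ dot b w = q} + 1 := by
    have : F ⊆ insert 0 (({w : Wt (e + 3) | dot a w = p ∧ dot b w = q} : Finset _).image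
        Subtype.val) := by
      intro w hw
      by_cases h0 : w = 0
      · simp [h0]
      · refine mem_insert_of_mem (mem_image.mpr ⟨⟨w, h0⟩, ?_, rfl⟩)
        simpa [hF] using hw
    exact (card_le_card this).trans ((card_insert_le _ _).trans
      (Nat.add_le_add_right card_image_le 1))
  have : 1 ≤ 2 ^ e := Nat.one_le_two_pow
  omega

/-- Two linear conditions with the same right-hand side are always compatible, whether or not the
two vectors coincide. -/
theorem count_same {e : ℕ} (a b : Wt (e + 3)) (p : ZMod 2) :
    2 ^ e ≤ #{w : Wt (e + 3) | dot a w = p ∧ dot b w = p} := by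
  apply count_of_mem
  rcases zmod2_cases p with rfl | rfl
  · exact ⟨0, by simp⟩
  · by_cases hab : a = b
    · subst hab
      obtain ⟨w, hw⟩ := exists_dot_eq_one a
      exact ⟨w, hw, hw⟩
    · obtain ⟨w, h₁, h₂⟩ := exists_dot_zero_one hab
      obtain ⟨w', h₁', h₂'⟩ := exists_dot_zero_one (Ne.symm hab)
      exact ⟨w + w', by simp [dotProduct_add, *], by simp [dotProduct_add, *]⟩

theorem count_one {e : ℕ} (a : Wt (e + 3)) (p : ZMod 2) :
    2 ^ e ≤ #{w : Wt (e + 3) | dot a w = p} := by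
  simpa using count_same a a p

theorem count_ne {e : ℕ} {a b : Wt (e + 3)} (hab : a ≠ b) (p q : ZMod 2) :
    2 ^ e ≤ #{w : Wt (e + 3) | dot a w = p ∧ dot b w = q} := by
  by_cases hpq : p = q
  · subst hpq; exact count_same a b p
  apply count_of_mem
  rcases zmod2_cases p with rfl | rfl
  · obtain rfl := (zmod2_cases q).resolve_left (Ne.symm hpq)
    exact exists_dot_zero_one hab
  · obtain rfl := (zmod2_cases q).resolve_right (Ne.symm hpq)
    obtain ⟨w, h₁, h₂⟩ := exists_dot_zero_one (Ne.symm hab)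
    exact ⟨w, h₂, h₁⟩

theorem card_Wt (e : ℕ) : Fintype.card (Wt (e + 3)) + 1 = 8 * 2 ^ e := by
  have h2 : Fintype.card (Wt (e + 3)) = 2 ^ (e + 3) - 1 := by
    simp [ZMod.card]
  have : 1 ≤ 2 ^ e := Nat.one_le_two_pow
  rw [h2, pow_add]
  omega

/-! ### A family of tests, and a product count -/

/-- A finite family of `𝔽₂`-valued tests on a finite set of points, indexed by pairs `(l, y)` of a
label and a point, such that any two tests differ at some point, while for each label `l` and any
two points some test `(l, y)` takes the same value at both.

The points are pairs `(i, a)` with `i : Fin 3`. The test with index `(l, (i, b))` vanishes outside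
block `i` and is there the indicator of a nonempty set depending injectively on `(l, b)`. Two
points always leave one of the three blocks untouched, which gives the last property. -/
theorem exists_tests (L : Type) [Fintype L] :
    ∃ (e : ℕ) (tst : L × (Fin 3 × Fin e) → Fin 3 × Fin e → ZMod 2), 0 < e ∧
      (∀ l l', l ≠ l' → ∃ x, tst l x ≠ tst l' x) ∧
      ∀ l x x', ∃ y, tst (l, y) x = tst (l, y) x' := by
  classical
  obtain ⟨e, he0, he⟩ : ∃ e : ℕ, 0 < e ∧ Fintype.card L * e + 1 ≤ 2 ^ e := by
    have h1 : ∀ m : ℕ, m ^ 2 ≤ 2 * 2 ^ m := by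
      intro m
      induction m with
      | zero => simp
      | succ m ih =>
        rcases Nat.lt_or_ge m 3 with h | h
        · interval_cases m <;> norm_num
        · rw [pow_succ 2 m]; nlinarith
    refine ⟨2 * Fintype.card L + 4, by omega, ?_⟩
    have := h1 (2 * Fintype.card L + 4)
    nlinarith
  have hcard : Fintype.card (L × Fin e) ≤ Fintype.card {S : Finset (Fin e) // S ≠ ∅} := by
    have := Fintype.card_subtype_compl (fun S : Finset (Fin e) => S = ∅)
    simp only [Fintype.card_subtype_eq, Fintype.card_finset, Fintype.card_fin] at this
    rw [← Nat.card_eq_fintype_card] at this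
    rw [← Nat.card_eq_fintype_card (α := {S : Finset (Fin e) // S ≠ ∅}), Fintype.card_prod,
      Fintype.card_fin]
    change Nat.card {S : Finset (Fin e) // S ≠ ∅} = _ at this
    omega
  obtain ⟨c⟩ := Function.Embedding.nonempty_of_card_le hcard
  refine ⟨e, fun l x => if l.2.1 = x.1 ∧ x.2 ∈ (c (l.1, l.2.2)).1 then 1 else 0, he0, ?_, ?_⟩
  · rintro ⟨l, i, y⟩ ⟨l', i', y'⟩ hne
    by_cases hi : i = i'
    · subst hi
      have hS : (c (l, y)).1 ≠ (c (l', y')).1 := by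
        intro h
        have := c.injective (Subtype.ext h)
        simp only [Prod.mk.injEq] at this
        exact hne (by rw [this.1, this.2])
      obtain ⟨a, ha⟩ : ∃ a, ¬ (a ∈ (c (l, y)).1 ↔ a ∈ (c (l', y')).1) := by
        by_contra h; push Not at h; exact hS (Finset.ext h)
      refine ⟨(i, a), ?_⟩
      by_cases h1 : a ∈ (c (l, y)).1 <;> by_cases h2 : a ∈ (c (l', y')).1 <;> simp_all
    · -- a test is not identically zero on its own block
      obtain ⟨a, ha⟩ := nonempty_iff_ne_empty.mpr (c (l, y)).2
      exact ⟨(i, a), by simp [ha, Ne.symm hi]⟩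
  · intro l x x'
    obtain ⟨i, hi, hi'⟩ : ∃ i : Fin 3, i ≠ x.1 ∧ i ≠ x'.1 := by
      generalize x.1 = a
      generalize x'.1 = b
      revert a b; decide
    exact ⟨(i, ⟨0, he0⟩), by simp [hi, hi']⟩

theorem pow_le_card_pi {R : Type} [Fintype R] [DecidableEq R] {W : Type}
    (B : R → Finset W) (T : Finset R) (q c : ℕ) (hT : ∀ r ∈ T, 1 ≤ #(B r))
    (hq : ∀ r, r ∉ T → q ≤ #(B r)) (hc : c + #T = Fintype.card R) :
    q ^ c ≤ #(Fintype.piFinset B) := by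
  rw [Fintype.card_piFinset, ← prod_compl_mul_prod T]
  have h1 : q ^ c ≤ ∏ r ∈ Tᶜ, #(B r) := by
    have : #Tᶜ = c := by rw [card_compl]; omega
    rw [← this]
    exact pow_card_le_prod _ _ _ (fun r hr => hq r (by simpa using hr))
  have h2 : 1 ≤ ∏ r ∈ T, #(B r) := Nat.succ_le_of_lt (Finset.prod_pos fun r hr => hT r hr)
  exact h1.trans (Nat.le_mul_of_pos_right _ h2)

/-! ### Types, shapes and good tuples -/

section

variable {N n : ℕ}

/-- The roles of the `n + 2` vertices of an edge: `none` is the centre `x`, `some none` is the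
centre `y`, and `some (some j)` is the leaf `z_j`. -/
abbrev Rl (n : ℕ) := Option (Option (Fin n))

/-- A type `(t, J)`: the arc `t` of the centres and the arcs `J j` of the leaves, the arcs being
indexed cyclically by `ZMod N`. -/
abbrev Ty (N n : ℕ) := ZMod N × (Fin n → ZMod N)

/-- A type is valid if its leaves lie on distinct arcs, none of them equal or adjacent to the arc of
the centres. -/
def Valid (τ : Ty N n) : Prop :=
  Function.Injective τ.2 ∧ ∀ j, τ.2 j ≠ τ.1 - 1 ∧ τ.2 j ≠ τ.1 ∧ τ.2 j ≠ τ.1 + 1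

/-- The placement of the centres `(x, y)` of an edge of type `(t, J)`: on the arcs `(t, t)` (`mid`),
`(t - 1, t)` (`left`) or `(t, t + 1)` (`right`). -/
inductive Shape
  | mid
  | left
  | right

/-- The arc of the vertex playing a given role in an edge of given shape and type. -/
def arcOf : Shape → Ty N n → Rl n → ZMod N
  | .mid, τ, none => τ.1
  | .left, τ, none => τ.1 - 1
  | .right, τ, none => τ.1
  | .mid, τ, some none => τ.1
  | .left, τ, some none => τ.1
  | .right, τ, some none => τ.1 + 1
  | .mid, τ, some (some j) => τ.2 j
  | .left, τ, some (some j) => τ.2 j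
  | .right, τ, some (some j) => τ.2 j

/-- The data on a vertex set `X` from which edges are built: the arc of each vertex, a type and a
bit for each pair of vertices (the bit `bit c z` is thought of as read by `c` off `z`), and an
injective numbering `C`, which also serves to realise the vertices as natural numbers. -/
structure Sys (N n : ℕ) (X : Type) where
  arc : X → ZMod N
  typ : X → X → Ty N n
  bit : X → X → ZMod 2
  C : X → ℕ
  C_inj : Function.Injective C

/-- `G` is an edge of shape `s` and type `τ`: the vertices lie on the prescribed arcs, every pair
has type `τ`, and a centre lying on the arc `t` confirms its role by the bits read off the leaves,
which are all `0` for `x` and all `1` for `y`. If both centres lie on `t`, their numbers are in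
the order `x`, `y`. -/
structure Good {X : Type} (Y : Sys N n X) (s : Shape) (τ : Ty N n) (G : Rl n → X) : Prop where
  valid : Valid τ
  arc : ∀ r, Y.arc (G r) = arcOf s τ r
  typ : ∀ r r', r ≠ r' → Y.typ (G r) (G r') = τ
  bitx : s ≠ .left → ∀ j, Y.bit (G none) (G (some (some j))) = 0
  bity : s ≠ .right → ∀ j, Y.bit (G (some none)) (G (some (some j))) = 1
  ord : s = .mid → Y.C (G none) < Y.C (G (some none))

/-- For a given type, the arc of a vertex determines its role, except that both `x` and `y` may lie
on the arc `t`. -/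
theorem arcOf_eq_cases (h1 : (1 : ZMod N) ≠ 0) (h2 : (2 : ZMod N) ≠ 0) {τ : Ty N n}
    (hτ : Valid τ) {s s' : Shape} {r r' : Rl n} (h : arcOf s τ r = arcOf s' τ r') :
    r = r' ∨ (r = none ∧ r' = some none ∧ s ≠ .left ∧ s' ≠ .right) ∨
      (r = some none ∧ r' = none ∧ s ≠ .right ∧ s' ≠ .left) := by
  obtain ⟨hinj, hz⟩ := hτ
  have n₁ : τ.1 - 1 ≠ τ.1 := fun e => h1 (by linear_combination -e)
  have n₂ : τ.1 + 1 ≠ τ.1 := fun e => h1 (by linear_combination e)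
  have n₃ : τ.1 - 1 ≠ τ.1 + 1 := fun e => h2 (by linear_combination -e)
  rcases r with _ | _ | j <;> rcases r' with _ | _ | j'
  · simp
  · cases s <;> cases s' <;> simp only [arcOf] at h <;> grind
  · obtain ⟨z₁, z₂, z₃⟩ := hz j'
    cases s <;> cases s' <;> simp only [arcOf] at h <;> grind
  · cases s <;> cases s' <;> simp only [arcOf] at h <;> grind
  · simp
  · obtain ⟨z₁, z₂, z₃⟩ := hz j'
    cases s <;> cases s' <;> simp only [arcOf] at h <;> grind
  · obtain ⟨z₁, z₂, z₃⟩ := hz j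
    cases s <;> cases s' <;> simp only [arcOf] at h <;> grind
  · obtain ⟨z₁, z₂, z₃⟩ := hz j
    cases s <;> cases s' <;> simp only [arcOf] at h <;> grind
  · rw [@hinj j j' (by cases s <;> cases s' <;> simpa only [arcOf] using h)]
    simp

theorem Good.injective {X : Type} {Y : Sys N n X} (h1 : (1 : ZMod N) ≠ 0)
    (h2 : (2 : ZMod N) ≠ 0) {s : Shape} {τ : Ty N n} {G : Rl n → X} (h : Good Y s τ G) :
    Function.Injective G := by
  intro r r' hrr
  have ha : arcOf s τ r = arcOf s τ r' := by rw [← h.arc, ← h.arc, hrr]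
  have hmid : s ≠ .left → s ≠ .right → s = .mid := by cases s <;> simp
  rcases arcOf_eq_cases h1 h2 h.valid ha with h' | ⟨rfl, rfl, hl, hr⟩ | ⟨rfl, rfl, hr, hl⟩
  · exact h'
  · have := h.ord (hmid hl hr)
    rw [hrr] at this; omega
  · have := h.ord (hmid hl hr)
    rw [hrr] at this; omega

/-- Two vertices common to two edges have the same roles in both, and the edges have the same type.
An exchange of `x` and `y` is excluded by the bit read off the other vertex if that is a leaf, and
by the numbering if it is the other centre. -/
theorem Good.role_unique {X : Type} {Y : Sys N n X} (h1 : (1 : ZMod N) ≠ 0)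
    (h2 : (2 : ZMod N) ≠ 0) {s s' : Shape} {τ τ' : Ty N n} {G G' : Rl n → X}
    (h : Good Y s τ G) (h' : Good Y s' τ' G') {r₁ r₂ r₁' r₂' : Rl n} (hne : r₁ ≠ r₂)
    (e₁ : G r₁ = G' r₁') (e₂ : G r₂ = G' r₂') : τ = τ' ∧ r₁ = r₁' := by
  have hne' : r₁' ≠ r₂' := by
    rintro rfl
    exact hne (h.injective h1 h2 (e₁.trans e₂.symm))
  have hτ : τ = τ' := by
    rw [← h.typ _ _ hne, e₁, e₂, h'.typ _ _ hne']
  subst hτ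
  refine ⟨rfl, ?_⟩
  have a₁ : arcOf s τ r₁ = arcOf s' τ r₁' := by rw [← h.arc, ← h'.arc, e₁]
  have a₂ : arcOf s τ r₂ = arcOf s' τ r₂' := by rw [← h.arc, ← h'.arc, e₂]
  have hmid : ∀ s : Shape, s ≠ .left → s ≠ .right → s = .mid := by intro s; cases s <;> simp
  rcases arcOf_eq_cases h1 h2 h.valid a₁ with h3 | ⟨rfl, rfl, hl, hr⟩ | ⟨rfl, rfl, hr, hl⟩
  · exact h3
  · exfalso
    rcases arcOf_eq_cases h1 h2 h.valid a₂ with rfl | ⟨rfl, rfl, -, -⟩ | ⟨rfl, rfl, hr', hl'⟩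
    · rcases r₂ with _ | _ | j
      · exact hne rfl
      · exact hne' rfl
      · have b₁ := h.bitx hl j
        have b₂ := h'.bity hr j
        rw [e₁, e₂, b₂] at b₁
        exact one_ne_zero b₁
    · exact hne rfl
    · have o₁ := h.ord (hmid _ hl hr')
      have o₂ := h'.ord (hmid _ hl' hr)
      rw [e₁, e₂] at o₁
      omega
  · exfalso
    rcases arcOf_eq_cases h1 h2 h.valid a₂ with rfl | ⟨rfl, rfl, hl', hr'⟩ | ⟨rfl, rfl, -, -⟩
    · rcases r₂ with _ | _ | j
      · exact hne' rfl
      · exact hne rfl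
      · have b₁ := h.bity hr j
        have b₂ := h'.bitx hl j
        rw [e₁, e₂, b₂] at b₁
        exact zero_ne_one b₁
    · have o₁ := h.ord (hmid _ hl' hr)
      have o₂ := h'.ord (hmid _ hl hr')
      rw [e₁, e₂] at o₁
      omega
    · exact hne rfl

/-! ### Vanishing orders -/

/-- A number giving the position of a role in an edge of type `τ` when the cycle of arcs is cut
at `κ`. It depends on the type only, not on the shape: `x` comes immediately before `y`. -/
def pos (κ : ZMod N) (τ : Ty N n) : Rl n → ℕ
  | none => 2 * (τ.1 - κ).val
  | some none => 2 * (τ.1 - κ).val + 1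
  | some (some j) => 2 * (τ.2 j - κ).val

theorem val_sub_one [NeZero N] {w : ZMod N} (hw : w ≠ 0) : (w - 1).val + 1 = w.val := by
  have hN := NeZero.pos N
  have hv := ZMod.val_lt w
  have h0 : w.val ≠ 0 := fun h => hw ((ZMod.val_eq_zero w).mp h)
  have : w - 1 = ((w.val - 1 : ℕ) : ZMod N) := by
    rw [Nat.cast_sub (by omega)]; simp
  rw [this, ZMod.val_natCast, Nat.mod_eq_of_lt (by omega)]
  omega

theorem pos_injective [NeZero N] {κ : ZMod N} {τ : Ty N n} (hτ : Valid τ) :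
    Function.Injective (pos κ τ) := by
  have key : ∀ a b : ZMod N, (a - κ).val = (b - κ).val → a = b := fun a b h =>
    sub_left_injective (ZMod.val_injective N h)
  intro r r' h
  rcases r with _ | _ | j <;> rcases r' with _ | _ | j' <;> simp only [pos] at h
  · rfl
  · omega
  · exact absurd (key _ _ (by omega)) (hτ.2 j').2.1
  · omega
  · rfl
  · omega
  · exact absurd (key _ _ (by omega)) (hτ.2 j).2.1
  · omega
  · exact congrArg _ (congrArg _ (hτ.1 (key _ _ (by omega))))

/-- If the arc `κ` is missed by an edge, sorting its vertices by arc, counted from `κ`, and then by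
number, puts them in the order of `pos`. The cut at `κ` never separates `x` from `y`, as it is
not made on the arc of either and no leaf lies on `t - 1`, `t` or `t + 1`. -/
theorem Good.key_lt {X : Type} {Y : Sys N n X} [NeZero N] {κ : ZMod N} {s : Shape}
    {τ : Ty N n} {G : Rl n → X} (h : Good Y s τ G) (hκ : ∀ r, Y.arc (G r) ≠ κ) {r r' : Rl n}
    (hr : pos κ τ r < pos κ τ r') :
    (Y.arc (G r) - κ).val < (Y.arc (G r') - κ).val ∨
      ((Y.arc (G r) - κ).val = (Y.arc (G r') - κ).val ∧ Y.C (G r) < Y.C (G r')) := by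
  have key : ∀ a b : ZMod N, (a - κ).val = (b - κ).val → a = b := fun a b h =>
    sub_left_injective (ZMod.val_injective N h)
  have hx := h.arc none ▸ hκ none
  have hy := h.arc (some none) ▸ hκ (some none)
  have z1 := fun j e => (h.valid.2 j).1 (key _ _ e)
  have z2 := fun j e => (h.valid.2 j).2.1 (key _ _ e)
  have z3 := fun j e => (h.valid.2 j).2.2 (key _ _ e)
  have hord := h.ord
  rw [h.arc, h.arc]
  cases s
  case left =>
    have hv : (τ.1 - 1 - κ).val + 1 = (τ.1 - κ).val := by
      rw [sub_right_comm]; exact val_sub_one (sub_ne_zero.mpr hy)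
    rcases r with _ | _ | j <;> rcases r' with _ | _ | j' <;>
      simp only [pos, arcOf] at hr ⊢ <;> grind
  case right =>
    have hv : (τ.1 - κ).val + 1 = (τ.1 + 1 - κ).val := by
      have := val_sub_one (sub_ne_zero.mpr hy)
      rwa [show arcOf .right τ (some none) - κ - 1 = τ.1 - κ by simp only [arcOf]; ring] at this
    rcases r with _ | _ | j <;> rcases r' with _ | _ | j' <;>
      simp only [pos, arcOf] at hr ⊢ <;> grind
  case mid =>
    have := hord rfl
    rcases r with _ | _ | j <;> rcases r' with _ | _ | j' <;>
      simp only [pos, arcOf] at hr ⊢ <;> grind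

/-- Vertices can be numbered consecutively in the order of an injective key. -/
theorem exists_ordering (V : Finset ℕ) (K : ℕ → ℕ) (hK : Set.InjOn K V) :
    ∃ σ : ℕ → ℕ, IsOrdering V σ ∧ ∀ u ∈ V, ∀ v ∈ V, σ u ≤ σ v ↔ K u ≤ K v := by
  have hlt : ∀ u ∈ V, ∀ v ∈ V, K u < K v →
      #{w ∈ V | K w ≤ K u} < #{w ∈ V | K w ≤ K v} := by
    intro u hu v hv huv
    apply card_lt_card
    rw [ssubset_iff_of_subset]
    · exact ⟨v, by simp [hv], by simp [huv]⟩
    · intro w hw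
      simp only [mem_filter] at hw ⊢
      exact ⟨hw.1, by omega⟩
  have hinj : Set.InjOn (fun u => #{w ∈ V | K w ≤ K u}) V := by
    intro u hu v hv h
    rcases lt_trichotomy (K u) (K v) with h' | h' | h'
    · have := hlt u hu v hv h'; simp only at h; omega
    · exact hK hu hv h'
    · have := hlt v hv u hu h'; simp only at h; omega
  refine ⟨fun u => #{w ∈ V | K w ≤ K u}, ?_, ?_⟩
  · have hmaps : Set.MapsTo (fun u => #{w ∈ V | K w ≤ K u}) V (Icc 1 #V : Finset ℕ) := by
      intro u hu
      simp only [coe_Icc, Set.mem_Icc]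
      exact ⟨card_pos.mpr ⟨u, by simpa using hu⟩, card_filter_le _ _⟩
    refine ⟨by simpa using hmaps, hinj, ?_⟩
    have := surjOn_of_injOn_of_card_le _ hmaps hinj (by simp)
    simpa using this
  · intro u hu v hv
    constructor
    · intro h
      by_contra! h'
      have := hlt v hv u hu h'
      simp only at h
      omega
    · intro h
      exact card_le_card fun w hw => by
        simp only [mem_filter] at hw ⊢
        exact ⟨hw.1, by omega⟩

/-- Any set of edges on fewer than `N` vertices has a `2`-vanishing order. Such a set of vertices
misses an arc `κ`; in the order by arc from `κ` and then by number, the rank of a vertex inside an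
edge depends only on its role and the type of the edge, which any pair containing it determines. -/
theorem exists_vanishing {X : Type} [Fintype X] (Y : Sys N n X) [NeZero N]
    (h1 : (1 : ZMod N) ≠ 0) (h2 : (2 : ZMod N) ≠ 0)
    (V' : Finset ℕ) (E' : Finset (Finset ℕ)) (hV : ∀ c ∈ V', ∃ v, Y.C v = c)
    (hE : ∀ e ∈ E', ∃ s τ G, Good Y s τ G ∧ e = univ.image (fun r => Y.C (G r)))
    (hsub : ∀ e ∈ E', e ⊆ V') (hcard : #V' < N) :
    ∃ σ : ℕ → ℕ, IsVanishingOrder 2 V' E' σ := by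
  classical
  rcases isEmpty_or_nonempty X with hX | hX
  · have hV0 : V' = ∅ := eq_empty_of_forall_notMem fun c hc => hX.false (hV c hc).choose
    obtain ⟨σ, hσ, -⟩ := exists_ordering V' id (Set.injOn_id _)
    refine ⟨σ, hσ, fun _ => ∅, fun e he => ?_⟩
    obtain ⟨_, _, G, _, _⟩ := hE e he
    exact (hX.false (G none)).elim
  set ι : ℕ → X := Function.invFun Y.C with hι
  have hιC : ∀ v, ι (Y.C v) = v := Function.leftInverse_invFun Y.C_inj
  obtain ⟨κ, hκ⟩ : ∃ κ : ZMod N, κ ∉ V'.image fun c => Y.arc (ι c) := by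
    by_contra! h
    have := card_le_card (fun κ _ => h κ : (univ : Finset (ZMod N)) ⊆ _)
    rw [card_univ, ZMod.card] at this
    have := card_image_le (s := V') (f := fun c => Y.arc (ι c))
    omega
  obtain ⟨M, hM⟩ : ∃ M, ∀ v, Y.C v < M :=
    ⟨univ.sup Y.C + 1, fun v => Nat.lt_succ_of_le (le_sup (mem_univ v))⟩
  set K : ℕ → ℕ := fun c => (Y.arc (ι c) - κ).val * M + c with hKdef
  have hKlt : ∀ u v, ((Y.arc u - κ).val < (Y.arc v - κ).val ∨
      ((Y.arc u - κ).val = (Y.arc v - κ).val ∧ Y.C u < Y.C v)) → K (Y.C u) < K (Y.C v) := by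
    intro u v h
    simp only [hKdef, hιC]
    have := hM u
    rcases h with h | ⟨h, h'⟩
    · nlinarith
    · rw [h]; omega
  have hKinj : Set.InjOn K V' := by
    intro c hc d hd h
    obtain ⟨u, rfl⟩ := hV c hc
    obtain ⟨v, rfl⟩ := hV d hd
    by_contra hne
    have h3 : ¬ K (Y.C u) < K (Y.C v) := by omega
    have h4 : ¬ K (Y.C v) < K (Y.C u) := by omega
    rcases lt_trichotomy (Y.arc u - κ).val (Y.arc v - κ).val with h' | h' | h'
    · exact h3 (hKlt u v (Or.inl h'))
    · rcases Nat.lt_or_gt_of_ne hne with h'' | h''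
      · exact h3 (hKlt u v (Or.inr ⟨h', h''⟩))
      · exact h4 (hKlt v u (Or.inr ⟨h'.symm, h''⟩))
    · exact h4 (hKlt v u (Or.inl h'))
  obtain ⟨σ, hσ, hσK⟩ := exists_ordering V' K hKinj
  have hrank : ∀ e ∈ E', ∀ s τ (G : Rl n → X), Good Y s τ G →
      e = univ.image (fun r => Y.C (G r)) →
      ∀ r, rankIn e σ (Y.C (G r)) = #{r' | pos κ τ r' ≤ pos κ τ r} := by
    intro e he s τ G hG heq r
    have hmem : ∀ r, Y.C (G r) ∈ V' := fun r =>
      hsub e he (heq ▸ mem_image_of_mem _ (mem_univ r))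
    have hk : ∀ r, Y.arc (G r) ≠ κ := by
      intro r h
      exact hκ (mem_image.mpr ⟨_, hmem r, by rw [hιC, h]⟩)
    have hle : ∀ r', σ (Y.C (G r')) ≤ σ (Y.C (G r)) ↔ pos κ τ r' ≤ pos κ τ r := by
      intro r'
      rw [hσK _ (hmem _) _ (hmem _)]
      rcases lt_trichotomy (pos κ τ r') (pos κ τ r) with h | h | h
      · have := hKlt _ _ (hG.key_lt hk h); omega
      · rw [pos_injective hG.valid h]; simp
      · have := hKlt _ _ (hG.key_lt hk h); omega
    have hinj : Function.Injective fun r => Y.C (G r) := Y.C_inj.comp (hG.injective h1 h2)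
    rw [rankIn, heq, filter_image, card_image_of_injective _ hinj]
    simp only [hle]
  have hcons : ∀ e ∈ E', ∀ e' ∈ E', ∀ X₀ ⊆ e, X₀ ⊆ e' → #X₀ = 2 →
      ∀ c ∈ X₀, rankIn e σ c = rankIn e' σ c := by
    intro e he e' he' X₀ hX hX' hc c hcX
    obtain ⟨d, hd, hcd⟩ : ∃ d ∈ X₀, d ≠ c := by
      exact exists_mem_ne (by omega) c
    obtain ⟨s, τ, G, hG, heq⟩ := hE e he
    obtain ⟨s', τ', G', hG', heq'⟩ := hE e' he'
    have m1 := hX hcX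
    have m2 := hX hd
    have m1' := hX' hcX
    have m2' := hX' hd
    rw [heq, mem_image] at m1 m2
    rw [heq', mem_image] at m1' m2'
    obtain ⟨r₁, -, f₁⟩ := m1
    obtain ⟨r₂, -, f₂⟩ := m2
    obtain ⟨r₁', -, f₁'⟩ := m1'
    obtain ⟨r₂', -, f₂'⟩ := m2'
    have hne : r₁ ≠ r₂ := by rintro rfl; exact hcd (f₂.symm.trans f₁)
    obtain ⟨rfl, rfl⟩ := hG.role_unique h1 h2 hG' hne (Y.C_inj (f₁.trans f₁'.symm))
      (Y.C_inj (f₂.trans f₂'.symm))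
    nth_rw 1 [← f₁]
    rw [← f₁', hrank e he s τ G hG heq, hrank e' he' s' τ G' hG' heq']
  refine ⟨σ, hσ, fun X₀ => if h : ∃ e ∈ E', X₀ ⊆ e then X₀.image (rankIn h.choose σ) else ∅, ?_⟩
  intro e he X₀ hX hc
  have h : ∃ e ∈ E', X₀ ⊆ e := ⟨e, he, hX⟩
  simp only [dif_pos h]
  exact image_congr fun c hcX =>
    hcons _ h.choose_spec.1 e he X₀ h.choose_spec.2 hX hc c hcX

end

/-! ### Edges and compatible types -/

section

variable {N n : ℕ}

open Classical in
/-- The edges of the hypergraph of a system, as sets of natural numbers. -/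
noncomputable def edges {X : Type} [Fintype X] (Y : Sys N n X) : Finset (Finset ℕ) :=
  {e ∈ (univ.image Y.C).powerset | ∃ s τ G, Good Y s τ G ∧ e = univ.image fun r => Y.C (G r)}

/-- A lower bound for a pair degree: distinct good tuples of one shape and type which agree in two
places give distinct edges through the corresponding pair, because the roles are determined. -/
theorem le_degS {X : Type} [Fintype X] {Y : Sys N n X} (h1 : (1 : ZMod N) ≠ 0)
    (h2 : (2 : ZMod N) ≠ 0) {Ω : Type} {S : Finset Ω} {f : Ω → Rl n → X} {s : Shape} {τ : Ty N n}
    {r₁ r₂ : Rl n} {U V : X} (hinj : Set.InjOn f S) (hG : ∀ ω ∈ S, Good Y s τ (f ω))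
    (hU : ∀ ω ∈ S, f ω r₁ = U) (hV : ∀ ω ∈ S, f ω r₂ = V) :
    #S ≤ degS (edges Y) {Y.C U, Y.C V} := by
  classical
  apply card_le_card_of_injOn fun ω => univ.image fun r => Y.C (f ω r)
  · intro ω hω
    simp only [coe_filter, edges, mem_filter, mem_powerset, Set.mem_ofPred_eq]
    refine ⟨⟨?_, s, τ, f ω, hG ω hω, rfl⟩, ?_⟩
    · intro c hc
      obtain ⟨r, -, rfl⟩ := mem_image.mp hc
      exact mem_image_of_mem _ (mem_univ _)
    · intro c hc
      rw [mem_insert, mem_singleton] at hc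
      rcases hc with rfl | rfl
      · exact mem_image.mpr ⟨r₁, mem_univ _, by rw [hU ω hω]⟩
      · exact mem_image.mpr ⟨r₂, mem_univ _, by rw [hV ω hω]⟩
  · intro ω hω ω' hω' h
    apply hinj hω hω'
    have hmem : ∀ r, ∃ r', f ω r = f ω' r' := by
      intro r
      have : Y.C (f ω r) ∈ univ.image fun r => Y.C (f ω' r) := by
        simp only at h
        rw [← h]
        exact mem_image.mpr ⟨r, mem_univ _, rfl⟩
      obtain ⟨r', -, hr'⟩ := mem_image.mp this
      exact ⟨r', Y.C_inj hr'.symm⟩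
    funext r
    obtain ⟨r₂, hr₂⟩ := exists_ne r
    obtain ⟨r', hr'⟩ := hmem r
    obtain ⟨r₂', hr₂'⟩ := hmem r₂
    obtain ⟨-, rfl⟩ := (hG ω hω).role_unique h1 h2 (hG ω' hω') hr₂.symm hr' hr₂'
    exact hr'

/-- The valid type `τ` has room for a pair of vertices on the arcs `i` and `j`. -/
def Compat (τ : Ty N n) (i j : ZMod N) : Prop :=
  Valid τ ∧ ∃ s r₁ r₂, r₁ ≠ r₂ ∧ arcOf s τ r₁ = i ∧ arcOf s τ r₂ = j

theorem Compat.symm {τ : Ty N n} {i j : ZMod N} (h : Compat τ i j) : Compat τ j i := by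
  obtain ⟨hτ, s, r₁, r₂, hr, h₁, h₂⟩ := h
  exact ⟨hτ, s, r₂, r₁, hr.symm, h₂, h₁⟩

/-- There is a valid type with given `t` and one prescribed leaf arc. -/
theorem exists_valid [NeZero N] (hN : n + 3 ≤ N) (t : ZMod N) (i : Fin n) (j : ZMod N)
    (hj : j ≠ t - 1 ∧ j ≠ t ∧ j ≠ t + 1) : ∃ J : Fin n → ZMod N, Valid (t, J) ∧ J i = j := by
  classical
  let A := {a : ZMod N // a ∈ ({t - 1, t, t + 1} : Finset (ZMod N))ᶜ}
  have hA : n ≤ Fintype.card A := by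
    rw [Fintype.card_coe, card_compl, ZMod.card]
    have := card_le_three (a := t - 1) (b := t) (c := t + 1)
    omega
  obtain ⟨f⟩ : Nonempty (Fin n ↪ A) := Function.Embedding.nonempty_of_card_le (by simpa using hA)
  let j' : A := ⟨j, by simpa using hj⟩
  refine ⟨fun x => (Equiv.swap (f i) j' (f x)).1, ⟨?_, ?_⟩, by simp [j']⟩
  · exact Subtype.val_injective.comp ((Equiv.injective _).comp f.injective)
  · intro x
    simpa using (Equiv.swap (f i) j' (f x)).2

theorem exists_compat [NeZero N] (hN : n + 3 ≤ N) (hn : 0 < n) (i j : ZMod N) :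
    ∃ τ : Ty N n, Compat τ i j := by
  have hout : ∀ t : ZMod N, ∃ a : ZMod N, a ≠ t - 1 ∧ a ≠ t ∧ a ≠ t + 1 := by
    classical
    intro t
    by_contra! h
    have hs : (univ : Finset (ZMod N)) ⊆ {t - 1, t, t + 1} := by
      intro a _
      have := h a
      simp only [mem_insert, mem_singleton]
      tauto
    have := card_le_card hs
    rw [card_univ, ZMod.card] at this
    have := card_le_three (a := t - 1) (b := t) (c := t + 1)
    omega
  have hvalid : ∀ t : ZMod N, ∃ J : Fin n → ZMod N, Valid (t, J) := fun t => by
    obtain ⟨a, ha⟩ := hout t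
    obtain ⟨J, hJ, -⟩ := exists_valid hN t ⟨0, hn⟩ a ha
    exact ⟨J, hJ⟩
  by_cases h0 : j = i
  · obtain ⟨J, hJ⟩ := hvalid i
    exact ⟨(i, J), hJ, .mid, none, some none, by simp, rfl, h0.symm⟩
  by_cases h1 : j = i + 1
  · obtain ⟨J, hJ⟩ := hvalid i
    exact ⟨(i, J), hJ, .right, none, some none, by simp, rfl, h1.symm⟩
  by_cases h2 : j = i - 1
  · obtain ⟨J, hJ⟩ := hvalid i
    exact ⟨(i, J), hJ, .left, some none, none, by simp, rfl, h2.symm⟩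
  obtain ⟨J, hJ, hj⟩ := exists_valid hN i ⟨0, hn⟩ j ⟨h2, h0, h1⟩
  exact ⟨(i, J), hJ, .mid, none, some (some ⟨0, hn⟩), by simp, rfl, hj⟩

end

/-! ### The vertices -/

/-- The Paley tournament on `ZMod 7`: `p` beats `q` if `p - q` is a nonzero square. Any two elements
are beaten by a common one. -/
def Beats (p q : ZMod 7) : Prop := p - q = 1 ∨ p - q = 2 ∨ p - q = 4

instance : DecidableRel Beats := fun p q =>
  inferInstanceAs (Decidable (p - q = 1 ∨ p - q = 2 ∨ p - q = 4))

theorem Beats.asymm : ∀ {p q : ZMod 7}, Beats p q → ¬ Beats q p := by decide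

theorem exists_beats : ∀ q₁ q₂ : ZMod 7, ∃ p, Beats p q₁ ∧ Beats p q₂ := by decide

/-- A vertex: its arc, a priority, a preferred type towards each arc, a test index (which is also a
point at which tests are evaluated), and a nonzero vector. -/
structure Vtx (N n : ℕ) (T : Type) (d : ℕ) where
  arc : ZMod N
  pri : ZMod 7
  pref : ZMod N → Ty N n
  test : T
  vec : Wt d

variable {N n d : ℕ} {T : Type}

def Vtx.equiv : Vtx N n T d ≃ ZMod N × ZMod 7 × (ZMod N → Ty N n) × T × Wt d where
  toFun v := (v.arc, v.pri, v.pref, v.test, v.vec)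
  invFun w := ⟨w.1, w.2.1, w.2.2.1, w.2.2.2.1, w.2.2.2.2⟩
  left_inv _ := rfl
  right_inv _ := rfl

noncomputable instance [NeZero N] [Fintype T] : Fintype (Vtx N n T d) :=
  Fintype.ofEquiv _ Vtx.equiv.symm

/-- The type proposed by a pair: the preference of the vertex whose priority beats the other's, and
the sum of both preferences if the priorities are equal. -/
def raw (u v : Vtx N n T d) : Ty N n :=
  if Beats u.pri v.pri then u.pref v.arc
  else if Beats v.pri u.pri then v.pref u.arc
  else u.pref v.arc + v.pref u.arc

open Classical in
/-- The type of a pair: the proposed one if it is compatible with the arcs, and otherwise any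
compatible one. -/
noncomputable def typ (u v : Vtx N n T d) : Ty N n :=
  if Compat (raw u v) u.arc v.arc then raw u v
  else Classical.epsilon fun τ => Compat τ u.arc v.arc

theorem raw_symm (u v : Vtx N n T d) : raw u v = raw v u := by
  unfold raw
  split_ifs with h h' h'
  · exact absurd h' h.asymm
  · rfl
  · rfl
  · exact add_comm _ _

theorem typ_symm (u v : Vtx N n T d) : typ u v = typ v u := by
  have h : ∀ τ : Ty N n, Compat τ u.arc v.arc = Compat τ v.arc u.arc := fun τ =>
    propext ⟨Compat.symm, Compat.symm⟩
  by_cases hc : Compat (raw v u) v.arc u.arc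
  · have hc' : Compat (raw v u) u.arc v.arc := hc.symm
    rw [typ, typ, raw_symm u v, if_pos hc, if_pos hc']
  · have hc' : ¬ Compat (raw v u) u.arc v.arc := fun h' => hc h'.symm
    rw [typ, typ, raw_symm u v, if_neg hc, if_neg hc']
    simp only [h]

theorem compat_typ [NeZero N] (hN : n + 3 ≤ N) (hn : 0 < n) (u v : Vtx N n T d) :
    Compat (typ u v) u.arc v.arc := by
  unfold typ
  split_ifs with h
  · exact h
  · exact Classical.epsilon_spec (exists_compat hN hn u.arc v.arc)

theorem typ_eq {u v : Vtx N n T d} {τ : Ty N n} (h : raw u v = τ)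
    (hc : Compat τ u.arc v.arc) : typ u v = τ := by
  subst h
  exact if_pos hc

/-- A function assigning to each test index the test itself. The label of a test is a pair
(priority, preferences). -/
abbrev TestFun (N n : ℕ) (T : Type) := (ZMod 7 × (ZMod N → Ty N n)) × T → T → ZMod 2

/-- The value at the point `x` of the test belonging to the vertex `c`. -/
abbrev Vtx.tst (f : TestFun N n T) (c : Vtx N n T d) (x : T) : ZMod 2 :=
  f ((c.pri, c.pref), c.test) x

/-- The system on the vertices `Vtx`: the bit read by `c` off `z` is the scalar product of their
vectors, shifted by the test of `c` at the point of `z`. -/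
noncomputable def sys [NeZero N] [Fintype T] (f : TestFun N n T) :
    Sys N n (Vtx N n T d) where
  arc := Vtx.arc
  typ := typ
  bit c z := dot c.vec z.vec + c.tst f z.test
  C v := Fintype.equivFin _ v
  C_inj := Fin.val_injective.comp (Equiv.injective _)

/-! ### Extending a pair to an edge -/

/-- The preferences of a new vertex on the arc `a` in an edge of type `τ` through old vertices on
the arcs `i` and `j`. It prefers `τ` towards these, and of two new vertices on different arcs
exactly one prefers `τ` towards the other, the other preference being `0`. -/
def newPref (i j : ZMod N) (τ : Ty N n) (a : ZMod N) : ZMod N → Ty N n := fun b =>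
  if b = i ∨ b = j ∨ a.val < b.val then τ else 0

/-- The extension of `U`, `V`, in the roles `r₁`, `r₂`, to a tuple of shape `s` and type `τ`. The
new vertices all have priority `p`, and their test indices and vectors are `ξ` and `ω`. -/
def extend (U V : Vtx N n T d) (r₁ r₂ : Rl n) (s : Shape) (τ : Ty N n) (p : ZMod 7)
    (ξ : Rl n → T) (ω : Rl n → Wt d) (r : Rl n) : Vtx N n T d :=
  if r = r₁ then U else if r = r₂ then V
  else ⟨arcOf s τ r, p, newPref U.arc V.arc τ (arcOf s τ r), ξ r, ω r⟩

section

variable {U V : Vtx N n T d} {r₁ r₂ : Rl n} {s : Shape} {τ : Ty N n} {p : ZMod 7}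

theorem extend_left (ξ : Rl n → T) (ω : Rl n → Wt d) :
    extend U V r₁ r₂ s τ p ξ ω r₁ = U := by simp [extend]

theorem extend_right (hr : r₁ ≠ r₂) (ξ : Rl n → T) (ω : Rl n → Wt d) :
    extend U V r₁ r₂ s τ p ξ ω r₂ = V := by simp [extend, hr.symm]

theorem extend_new {r : Rl n} (h₁ : r ≠ r₁) (h₂ : r ≠ r₂) (ξ : Rl n → T) (ω : Rl n → Wt d) :
    extend U V r₁ r₂ s τ p ξ ω r =
      ⟨arcOf s τ r, p, newPref U.arc V.arc τ (arcOf s τ r), ξ r, ω r⟩ := by simp [extend, h₁, h₂]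

theorem extend_arc (hU : U.arc = arcOf s τ r₁) (hV : V.arc = arcOf s τ r₂) (ξ : Rl n → T)
    (ω : Rl n → Wt d) (r : Rl n) : (extend U V r₁ r₂ s τ p ξ ω r).arc = arcOf s τ r := by
  unfold extend
  split_ifs with h₁ h₂
  · rw [hU, h₁]
  · rw [hV, h₂]
  · rfl

theorem extend_vec {ω : Rl n → Wt d} (hU : ω r₁ = U.vec) (hV : ω r₂ = V.vec) (ξ : Rl n → T)
    (r : Rl n) : (extend U V r₁ r₂ s τ p ξ ω r).vec = ω r := by
  unfold extend
  split_ifs with h₁ h₂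
  · rw [h₁, hU]
  · rw [h₂, hV]
  · rfl

/-- All pairs in the extension have type `τ`: pairs of an old and a new vertex because `p` beats the
old priorities, and pairs of new vertices because their preferences add up to `τ`. -/
theorem extend_typ [NeZero N] (hτ : Valid τ) (hr : r₁ ≠ r₂) (hU : U.arc = arcOf s τ r₁)
    (hV : V.arc = arcOf s τ r₂) (ht : typ U V = τ) (hpU : Beats p U.pri) (hpV : Beats p V.pri)
    (hnew : ∀ r r', r ≠ r' → r ≠ r₁ → r ≠ r₂ → arcOf s τ r ≠ arcOf s τ r')
    (ξ : Rl n → T) (ω : Rl n → Wt d) {r r' : Rl n} (hrr : r ≠ r') :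
    typ (extend U V r₁ r₂ s τ p ξ ω r) (extend U V r₁ r₂ s τ p ξ ω r') = τ := by
  have hcompat : ∀ r r', r ≠ r' → Compat τ (extend U V r₁ r₂ s τ p ξ ω r).arc
      (extend U V r₁ r₂ s τ p ξ ω r').arc := fun r r' h =>
    ⟨hτ, s, r, r', h, (extend_arc hU hV ξ ω r).symm, (extend_arc hU hV ξ ω r').symm⟩
  have hold : ∀ r r', r ≠ r' → r ≠ r₁ → r ≠ r₂ → (r' = r₁ ∨ r' = r₂) →
      typ (extend U V r₁ r₂ s τ p ξ ω r) (extend U V r₁ r₂ s τ p ξ ω r') = τ := by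
    intro r r' hne n₁ n₂ h
    refine typ_eq ?_ (hcompat r r' hne)
    rw [extend_new n₁ n₂]
    rcases h with rfl | rfl
    · rw [extend_left, raw, if_pos hpU]
      simp [newPref]
    · rw [extend_right hr, raw, if_pos hpV]
      simp [newPref]
  by_cases o : r = r₁ ∨ r = r₂
  · by_cases o' : r' = r₁ ∨ r' = r₂
    · rcases o with rfl | rfl <;> rcases o' with rfl | rfl
      · exact absurd rfl hrr
      · rw [extend_left, extend_right hr, ht]
      · rw [extend_left, extend_right hr, typ_symm, ht]
      · exact absurd rfl hrr
    · push Not at o'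
      rw [typ_symm]
      exact hold r' r hrr.symm o'.1 o'.2 o
  · push Not at o
    by_cases o' : r' = r₁ ∨ r' = r₂
    · exact hold r r' hrr o.1 o.2 o'
    · push Not at o'
      refine typ_eq ?_ (hcompat r r' hrr)
      have hp : ¬ Beats p p := fun h => h.asymm h
      rw [extend_new o.1 o.2, extend_new o'.1 o'.2, raw, if_neg hp, if_neg hp]
      have e₁ := hnew r r₁ o.1 o.1 o.2
      have e₂ := hnew r r₂ o.2 o.1 o.2
      have e₁' := hnew r' r₁ o'.1 o'.1 o'.2
      have e₂' := hnew r' r₂ o'.2 o'.1 o'.2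
      rw [← hU] at e₁ e₁'
      rw [← hV] at e₂ e₂'
      simp only [newPref, e₁, e₂, e₁', e₂', false_or]
      have : (arcOf s τ r).val ≠ (arcOf s τ r').val := fun h =>
        hnew r r' hrr o.1 o.2 (ZMod.val_injective N h)
      rcases Nat.lt_or_gt_of_ne this with h | h
      · rw [if_pos h, if_neg (by omega), add_zero]
      · rw [if_neg (by omega), if_pos h, zero_add]

end

end VanishingOrder

namespace VanishingOrder

/-! ### Degrees of pairs -/

variable {N n e : ℕ} {T : Type} [NeZero N] [Fintype T]

/-- The degree of a pair of vertices in the hypergraph of `sys f`. -/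
noncomputable def pairDeg {d : ℕ} (f : TestFun N n T) (U V : Vtx N n T d) : ℕ :=
  degS (edges (sys (d := d) f)) {(sys f).C U, (sys f).C V}

theorem pairDeg_comm {d : ℕ} (f : TestFun N n T) (U V : Vtx N n T d) :
    pairDeg f U V = pairDeg f V U := by
  rw [pairDeg, pairDeg, pair_comm]

/-- A lower bound for a pair degree by the number of admissible choices `ω` of vectors for the new
vertices, once the bits and the numbering have the required values. -/
theorem le_degS_extend {d : ℕ} (f : TestFun N n T) (h1 : (1 : ZMod N) ≠ 0) (h2 : (2 : ZMod N) ≠ 0)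
    {U V : Vtx N n T d} {r₁ r₂ : Rl n} {s : Shape} {τ : Ty N n} {p : ZMod 7}
    (hτ : Valid τ) (hr : r₁ ≠ r₂) (hU : U.arc = arcOf s τ r₁)
    (hV : V.arc = arcOf s τ r₂) (ht : typ U V = τ) (hpU : Beats p U.pri) (hpV : Beats p V.pri)
    (hnew : ∀ r r', r ≠ r' → r ≠ r₁ → r ≠ r₂ → arcOf s τ r ≠ arcOf s τ r')
    (ξ : Rl n → T) (S : Finset (Rl n → Wt d)) (hS : ∀ ω ∈ S, ω r₁ = U.vec ∧ ω r₂ = V.vec)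
    (hx : ∀ ω ∈ S, s ≠ .left → ∀ j, (sys f).bit (extend U V r₁ r₂ s τ p ξ ω none)
      (extend U V r₁ r₂ s τ p ξ ω (some (some j))) = 0)
    (hy : ∀ ω ∈ S, s ≠ .right → ∀ j, (sys f).bit (extend U V r₁ r₂ s τ p ξ ω (some none))
      (extend U V r₁ r₂ s τ p ξ ω (some (some j))) = 1)
    (hord : ∀ ω ∈ S, s = .mid → (sys f).C (extend U V r₁ r₂ s τ p ξ ω none) <
      (sys f).C (extend U V r₁ r₂ s τ p ξ ω (some none))) :
    #S ≤ pairDeg f U V := by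
  refine le_degS h1 h2 (f := fun ω => extend U V r₁ r₂ s τ p ξ ω) (s := s) (τ := τ)
    (r₁ := r₁) (r₂ := r₂) ?_ ?_ (fun ω _ => extend_left ξ ω) (fun ω _ => extend_right hr ξ ω)
  · intro ω hω ω' hω' h
    funext r
    have := congrArg Vtx.vec (congrFun h r)
    rwa [extend_vec (hS ω hω).1 (hS ω hω).2, extend_vec (hS ω' hω').1 (hS ω' hω').2] at this
  · intro ω hω
    exact ⟨hτ, extend_arc hU hV ξ ω, fun r r' hrr => extend_typ hτ hr hU hV ht hpU hpV hnew ξ ω hrr,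
      hx ω hω, hy ω hω, hord ω hω⟩

theorem zmod2_add_eq {a b c : ZMod 2} : a + b = c ↔ a = c + b := by
  revert a b c; decide

theorem card_Rl (n : ℕ) : Fintype.card (Rl n) = n + 2 := by simp

/-- The degree of two centres on the same arc. Each leaf has to satisfy one linear condition for `U`
and one for `V`. These are compatible if the two vectors differ; if the vectors coincide, the tests
of `U` and `V` are different, and the leaves are placed at a point where they differ. -/
theorem le_degS_mid (f : TestFun N n T) (hf : ∀ l l', l ≠ l' → ∃ x, f l x ≠ f l' x)
    (h1 : (1 : ZMod N) ≠ 0) (h2 : (2 : ZMod N) ≠ 0) {U V : Vtx N n T (e + 3)} {τ : Ty N n}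
    (hτ : Valid τ) (hU : U.arc = τ.1) (hV : V.arc = τ.1) (ht : typ U V = τ)
    (hC : (sys f).C U < (sys f).C V) :
    (2 ^ e) ^ n ≤ pairDeg f U V := by
  classical
  obtain ⟨p, hpU, hpV⟩ := exists_beats U.pri V.pri
  obtain ⟨x, hx⟩ : ∃ x, 2 ^ e ≤
      #{w : Wt (e + 3) | dot U.vec w = U.tst f x ∧ dot V.vec w = 1 + V.tst f x} := by
    by_cases h : U.vec = V.vec
    · have hl : ((U.pri, U.pref), U.test) ≠ ((V.pri, V.pref), V.test) := by
        intro hl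
        simp only [Prod.mk.injEq] at hl
        obtain ⟨⟨l₁, l₂⟩, l₃⟩ := hl
        have : U = V := by
          cases U; cases V
          simp_all
        rw [this] at hC
        exact lt_irrefl _ hC
      obtain ⟨x, hx⟩ := hf _ _ hl
      refine ⟨x, (count_one U.vec (U.tst f x)).trans (le_of_eq ?_)⟩
      have hx' : U.tst f x = 1 + V.tst f x := by
        have : ∀ a b : ZMod 2, a ≠ b → a = 1 + b := by decide
        exact this _ _ hx
      rw [← h, ← hx']
      simp
    · exact ⟨U.test, count_ne h _ _⟩
  let B : Rl n → Finset (Wt (e + 3)) := fun r => match r with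
    | none => {U.vec}
    | some none => {V.vec}
    | some (some _) => {w | dot U.vec w = U.tst f x ∧ dot V.vec w = 1 + V.tst f x}
  have hB : (2 ^ e) ^ n ≤ #(Fintype.piFinset B) := by
    refine pow_le_card_pi B {none, some none} _ _ ?_ ?_ ?_
    · intro r hr
      simp only [mem_insert, mem_singleton] at hr
      rcases hr with rfl | rfl <;> simp [B]
    · intro r hr
      rcases r with _ | _ | j
      · simp at hr
      · simp at hr
      · exact hx
    · rw [card_Rl]; rfl
  refine hB.trans (le_degS_extend f h1 h2 (s := .mid) (r₁ := none) (r₂ := some none) (p := p) hτ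
    (by simp) hU hV ht hpU hpV ?_ (fun _ => x) _ ?_ ?_ ?_ ?_)
  · intro r r' hne n₁ n₂ h
    rcases arcOf_eq_cases h1 h2 hτ h with h | ⟨h, -⟩ | ⟨h, -⟩
    · exact hne h
    · exact n₁ h
    · exact n₂ h
  · intro ω hω
    rw [Fintype.mem_piFinset] at hω
    exact ⟨mem_singleton.mp (hω none), mem_singleton.mp (hω (some none))⟩
  · intro ω hω _ j
    rw [Fintype.mem_piFinset] at hω
    have hj := (mem_filter.mp (hω (some (some j)))).2.1
    rw [extend_left, extend_new (by simp) (by simp)]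
    change dot U.vec (ω (some (some j))) + U.tst f x = 0
    rw [zmod2_add_eq, zero_add, hj]
  · intro ω hω _ j
    rw [Fintype.mem_piFinset] at hω
    have hj := (mem_filter.mp (hω (some (some j)))).2.2
    rw [extend_right (by simp), extend_new (by simp) (by simp)]
    change dot V.vec (ω (some (some j))) + V.tst f x = 1
    rw [zmod2_add_eq, hj]
  · intro ω hω _
    rwa [extend_left, extend_right (by simp)]

/-- The role of the centre lying on the arc `t` in the shapes `left` and `right`; the value at `mid`
is irrelevant. -/
def ctr (n : ℕ) : Shape → Rl n
  | .left => some none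
  | _ => none

/-- The bit which that centre has to read off every leaf. -/
def tgt : Shape → ZMod 2
  | .left => 1
  | _ => 0

/-- The degree of a pair in a side shape, where only the centre `c` on the arc `t` reads bits. If it
is one of the two given vertices, each new leaf has one linear condition to satisfy. If it is new,
its vector has to satisfy at most one condition for each given vertex. With the test of `c` chosen
to agree at the points of `U` and `V` these have equal right-hand sides, so they are compatible. -/
theorem le_degS_side (f : TestFun N n T)
    (hf : ∀ l x x', ∃ y, f (l, y) x = f (l, y) x')
    (h1 : (1 : ZMod N) ≠ 0) (h2 : (2 : ZMod N) ≠ 0) {U V : Vtx N n T (e + 3)} {τ : Ty N n}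
    {s : Shape} {r₁ r₂ : Rl n} (hs : s ≠ .mid) (hr : r₁ ≠ r₂)
    (hτ : Valid τ) (hU : U.arc = arcOf s τ r₁) (hV : V.arc = arcOf s τ r₂) (ht : typ U V = τ)
    (hr₂ : r₂ ≠ ctr n s)
    (hb : ∀ j, r₁ = ctr n s → r₂ = some (some j) → (sys f).bit U V = tgt s) :
    (2 ^ e) ^ n ≤ pairDeg f U V := by
  classical
  obtain ⟨p, hpU, hpV⟩ := exists_beats U.pri V.pri
  have hnew : ∀ r r', r ≠ r' → arcOf s τ r ≠ arcOf s τ r' := by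
    intro r r' hne h
    rcases arcOf_eq_cases h1 h2 hτ h with h | ⟨-, -, h, h'⟩ | ⟨-, -, h, h'⟩
    · exact hne h
    all_goals cases s <;> simp_all
  have hcz : ∀ j, ctr n s ≠ some (some j) := by
    intro j; cases s <;> simp [ctr]
  -- it suffices to control the bits read by the centre
  have main : ∀ (ξ : Rl n → T) (S : Finset (Rl n → Wt (e + 3))),
      (∀ ω ∈ S, ω r₁ = U.vec ∧ ω r₂ = V.vec) →
      (∀ ω ∈ S, ∀ j, (sys f).bit (extend U V r₁ r₂ s τ p ξ ω (ctr n s))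
        (extend U V r₁ r₂ s τ p ξ ω (some (some j))) = tgt s) →
      #S ≤ pairDeg f U V := by
    intro ξ S hS hbit
    refine le_degS_extend f h1 h2 hτ hr hU hV ht hpU hpV (fun r r' h _ _ => hnew r r' h) ξ S hS
      ?_ ?_ (fun _ _ h => absurd h hs)
    · intro ω hω h j
      cases s
      · exact absurd rfl hs
      · exact absurd rfl h
      · exact hbit ω hω j
    · intro ω hω h j
      cases s
      · exact absurd rfl hs
      · exact hbit ω hω j
      · exact absurd rfl h
  by_cases hc : r₁ = ctr n s
  · let B : Rl n → Finset (Wt (e + 3)) := fun r =>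
      if r = r₁ then {U.vec} else if r = r₂ then {V.vec}
      else ({w | dot U.vec w = tgt s + U.tst f U.test} : Finset (Wt (e + 3)))
    have hB : (2 ^ e) ^ n ≤ #(Fintype.piFinset B) := by
      refine pow_le_card_pi B {r₁, r₂} _ _ ?_ ?_ ?_
      · intro r hr'
        simp only [mem_insert, mem_singleton] at hr'
        rcases hr' with rfl | rfl <;> simp [B, hr.symm]
      · intro r hr'
        simp only [mem_insert, mem_singleton, not_or] at hr'
        simp only [B, if_neg hr'.1, if_neg hr'.2]
        exact count_one _ _
      · rw [card_Rl, card_pair hr]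
    refine hB.trans (main (fun _ => U.test) _ ?_ ?_)
    · intro ω hω
      rw [Fintype.mem_piFinset] at hω
      have m₁ := hω r₁
      have m₂ := hω r₂
      simp only [B, if_pos, if_neg hr.symm, mem_singleton] at m₁ m₂
      exact ⟨m₁, m₂⟩
    · intro ω hω j
      rw [Fintype.mem_piFinset] at hω
      rw [← hc, extend_left]
      by_cases hj : some (some j) = r₂
      · rw [hj, extend_right hr]
        exact hb j hc hj.symm
      · have hj' : some (some j) ≠ r₁ := fun h => hcz j (hc.symm.trans h.symm)
        rw [extend_new hj' hj]
        have m := hω (some (some j))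
        simp only [B, if_neg hj', if_neg hj, mem_filter, mem_univ, true_and] at m
        change dot U.vec (ω (some (some j))) + U.tst f U.test = tgt s
        rw [zmod2_add_eq, m]
  · set c := ctr n s with hcdef
    have hc₁ : c ≠ r₁ := Ne.symm hc
    have hc₂ : c ≠ r₂ := Ne.symm hr₂
    set l : ZMod 7 × (ZMod N → Ty N n) := (p, newPref U.arc V.arc τ (arcOf s τ c))
    obtain ⟨y, hy⟩ := hf l U.test V.test
    set β := tgt s + f (l, y) U.test with hβ
    let ξ : Rl n → T := fun r => if r = c then y else U.test
    let A : Finset (Wt (e + 3)) := {a | dot U.vec a = β ∧ dot V.vec a = β}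
    let B : Wt (e + 3) → Rl n → Finset (Wt (e + 3)) := fun a r =>
      if r = r₁ then {U.vec} else if r = r₂ then {V.vec} else if r = c then {a}
      else ({w | dot a w = β} : Finset (Wt (e + 3)))
    have hn : 1 ≤ n := by
      have := card_le_univ ({r₁, r₂, c} : Finset (Rl n))
      rw [card_Rl, card_eq_three.mpr ⟨r₁, r₂, c, hr, hc, hr₂, rfl⟩] at this
      omega
    have hB : ∀ a ∈ A, (2 ^ e) ^ (n - 1) ≤ #(Fintype.piFinset (B a)) := by
      intro a _
      refine pow_le_card_pi (B a) {r₁, r₂, c} _ _ ?_ ?_ ?_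
      · intro r hr'
        simp only [mem_insert, mem_singleton] at hr'
        rcases hr' with rfl | rfl | rfl <;> simp [B, hr.symm, hc₁, hc₂]
      · intro r hr'
        simp only [mem_insert, mem_singleton, not_or] at hr'
        simp only [B, if_neg hr'.1, if_neg hr'.2.1, if_neg hr'.2.2]
        exact count_one _ _
      · rw [card_Rl, card_eq_three.mpr ⟨r₁, r₂, c, hr, hc, hr₂, rfl⟩]
        omega
    have hBc : ∀ a, ∀ ω ∈ Fintype.piFinset (B a), ω c = a := by
      intro a ω hω
      rw [Fintype.mem_piFinset] at hω
      have := hω c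
      simpa [B, hc₁, hc₂] using this
    have hdisj : (A : Set (Wt (e + 3))).PairwiseDisjoint fun a => Fintype.piFinset (B a) := by
      intro a _ a' _ hne
      refine disjoint_left.mpr fun ω hω hω' => hne ?_
      rw [← hBc a ω hω, hBc a' ω hω']
    have hcard : (2 ^ e) ^ n ≤ #(A.biUnion fun a => Fintype.piFinset (B a)) := by
      rw [card_biUnion hdisj]
      calc (2 ^ e) ^ n = 2 ^ e * (2 ^ e) ^ (n - 1) := by
            rw [← pow_succ', Nat.sub_add_cancel hn]
        _ ≤ #A * (2 ^ e) ^ (n - 1) := Nat.mul_le_mul_right _ (count_same _ _ _)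
        _ = ∑ a ∈ A, (2 ^ e) ^ (n - 1) := by simp
        _ ≤ _ := sum_le_sum hB
    refine hcard.trans (main ξ _ ?_ ?_)
    · intro ω hω
      obtain ⟨a, -, hω⟩ := mem_biUnion.mp hω
      rw [Fintype.mem_piFinset] at hω
      have m₁ := hω r₁
      have m₂ := hω r₂
      simp only [B, if_pos, if_neg hr.symm, mem_singleton] at m₁ m₂
      exact ⟨m₁, m₂⟩
    · intro ω hω j
      obtain ⟨a, ha, hω⟩ := mem_biUnion.mp hω
      have hωc := hBc a ω hω
      rw [Fintype.mem_piFinset] at hω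
      have ha' := (mem_filter.mp ha).2
      have hjc : some (some j) ≠ c := (hcz j).symm
      have hdot : ∀ v w : Wt (e + 3), dot v w = dot w v := fun v w => dotProduct_comm _ _
      rw [extend_new hc₁ hc₂]
      by_cases j₁ : some (some j) = r₁
      · rw [j₁, extend_left]
        change dot (ω c) U.vec + f (l, ξ c) U.test = tgt s
        rw [hωc, hdot, ha'.1, zmod2_add_eq, hβ]
        simp [ξ]
      by_cases j₂ : some (some j) = r₂
      · rw [j₂, extend_right hr]
        change dot (ω c) V.vec + f (l, ξ c) V.test = tgt s
        rw [hωc, hdot, ha'.2, zmod2_add_eq, hβ, hy]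
        simp [ξ]
      · rw [extend_new j₁ j₂]
        have m := hω (some (some j))
        simp only [B, if_neg j₁, if_neg j₂, if_neg hjc, mem_filter, mem_univ, true_and] at m
        change dot (ω c) (ω (some (some j))) + f (l, ξ c) (ξ (some (some j))) = tgt s
        rw [hωc, m, zmod2_add_eq, hβ]
        simp [ξ, hjc]

/-- Every pair of vertices has degree at least `(2 ^ e) ^ n`. Its type and arcs fix the roles up to
the choice of shape, and for a centre on `t` with a leaf the bit read tells whether to complete it
to a `right` or to a `left` edge. -/
theorem le_degS_pair (f : TestFun N n T) (hf : ∀ l l', l ≠ l' → ∃ x, f l x ≠ f l' x)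
    (hf' : ∀ l x x', ∃ y, f (l, y) x = f (l, y) x')
    (h1 : (1 : ZMod N) ≠ 0) (h2 : (2 : ZMod N) ≠ 0) (hN : n + 3 ≤ N) (hn : 0 < n)
    {U V : Vtx N n T (e + 3)} (hUV : U ≠ V) :
    (2 ^ e) ^ n ≤ pairDeg f U V := by
  obtain ⟨τ, ht⟩ : ∃ τ, typ U V = τ := ⟨_, rfl⟩
  have ht' : typ V U = τ := by rw [typ_symm, ht]
  obtain ⟨hτ, s, r₁, r₂, hr, hU, hV⟩ := ht ▸ compat_typ hN hn U V
  -- for a centre on the arc `τ.1` together with a leaf, the bit read decides the shape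
  have hpair : ∀ {U V : Vtx N n T (e + 3)}, typ U V = τ → ∀ j, U.arc = τ.1 → V.arc = τ.2 j →
      (2 ^ e) ^ n ≤ pairDeg f U V := by
    intro U V ht j hU hV
    rcases zmod2_cases ((sys f).bit U V) with hb | hb
    · exact le_degS_side f hf' h1 h2 (s := .right) (r₁ := none) (r₂ := some (some j)) (by simp)
        (by simp) hτ hU hV ht (by simp [ctr]) (fun _ _ _ => hb)
    · exact le_degS_side f hf' h1 h2 (s := .left) (r₁ := some none) (r₂ := some (some j))
        (by simp) (by simp) hτ hU hV ht (by simp [ctr]) (fun _ _ _ => hb)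
  have hside : ∀ s : Shape, s ≠ .mid → ∀ r₁ r₂ : Rl n, r₁ ≠ r₂ → arcOf s τ r₁ = U.arc →
      arcOf s τ r₂ = V.arc → (2 ^ e) ^ n ≤ pairDeg f U V := by
    intro s hs r₁ r₂ hr hU hV
    have hctr : arcOf s τ (ctr n s) = τ.1 := by cases s <;> simp_all [ctr, arcOf]
    have hleaf : ∀ j, arcOf s τ (some (some j)) = τ.2 j := by intro j; cases s <;> rfl
    by_cases hA : ∃ j, r₁ = ctr n s ∧ r₂ = some (some j)
    · obtain ⟨j, rfl, rfl⟩ := hA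
      exact hpair ht j (hU.symm.trans hctr) (hV.symm.trans (hleaf j))
    by_cases hB : ∃ j, r₂ = ctr n s ∧ r₁ = some (some j)
    · obtain ⟨j, rfl, rfl⟩ := hB
      rw [pairDeg_comm]
      exact hpair ht' j (hV.symm.trans hctr) (hU.symm.trans (hleaf j))
    by_cases hc : r₂ = ctr n s
    · rw [pairDeg_comm]
      exact le_degS_side f hf' h1 h2 hs hr.symm hτ hV.symm hU.symm ht'
        (fun h => hr (h.trans hc.symm)) (fun j h h' => absurd ⟨j, h, h'⟩ hB)
    · exact le_degS_side f hf' h1 h2 hs hr hτ hU.symm hV.symm ht hc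
        (fun j h h' => absurd ⟨j, h, h'⟩ hA)
  cases s
  case left => exact hside .left (by simp) r₁ r₂ hr hU hV
  case right => exact hside .right (by simp) r₁ r₂ hr hU hV
  case mid =>
    have hmid : U.arc = τ.1 → V.arc = τ.1 →
        (2 ^ e) ^ n ≤ pairDeg f U V := by
      intro hU hV
      rcases Nat.lt_or_gt_of_ne fun h => hUV ((sys f).C_inj h) with h | h
      · exact le_degS_mid f hf h1 h2 hτ hU hV ht h
      · rw [pairDeg_comm]
        exact le_degS_mid f hf h1 h2 hτ hV hU ht' h
    rcases r₁ with _ | _ | j <;> rcases r₂ with _ | _ | j'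
    · exact absurd rfl hr
    · exact hmid hU.symm hV.symm
    · exact hpair ht j' hU.symm hV.symm
    · exact hmid hU.symm hV.symm
    · exact absurd rfl hr
    · exact hpair ht j' hU.symm hV.symm
    · rw [pairDeg_comm]; exact hpair ht' j hV.symm hU.symm
    · rw [pairDeg_comm]; exact hpair ht' j hV.symm hU.symm
    · exact hside .right (by simp) _ _ hr hU hV

theorem card_Vtx {d : ℕ} : Fintype.card (Vtx N n T d) =
    (N * (7 * (Fintype.card (ZMod N → Ty N n) * Fintype.card T))) * Fintype.card (Wt d) := by
  rw [Fintype.card_congr Vtx.equiv]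
  simp only [Fintype.card_prod, ZMod.card]
  ring

end VanishingOrder

/-- For all `k ≥ 4` and `m ≥ 1` there is `γ > 0` such that there are arbitrarily
large `k`-graphs `H` with `δ₂(H) ≥ γ |V(H)|^{k-2}` in which every subhypergraph on at most `m`
vertices admits a `2`-vanishing order. -/
theorem stmt_11 (k m : ℕ) (hk : 4 ≤ k) (hm : 1 ≤ m) :
    ∃ γ : ℝ, 0 < γ ∧ ∀ n₀ : ℕ, ∃ (V : Finset ℕ) (E : Finset (Finset ℕ)),
      IsKGraph k V E ∧ n₀ < V.card ∧
      γ * (V.card : ℝ) ^ (k - 2) ≤ (minDeg 2 V E : ℝ) ∧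
      ∀ (V' : Finset ℕ) (E' : Finset (Finset ℕ)),
        V' ⊆ V → E' ⊆ E → (∀ e ∈ E', e ⊆ V') → V'.card ≤ m →
          ∃ σ : ℕ → ℕ, IsVanishingOrder 2 V' E' σ := by
  classical
  obtain ⟨n, rfl⟩ : ∃ n, k = n + 2 := ⟨k - 2, by omega⟩
  have hn : 0 < n := by omega
  set N := m + n + 3 with hNdef
  have hN : n + 3 ≤ N := by omega
  have : NeZero N := ⟨by omega⟩
  have h1 : (1 : ZMod N) ≠ 0 := by
    have h : ((1 : ℕ) : ZMod N) ≠ 0 := by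
      rw [Ne, ZMod.natCast_eq_zero_iff]; exact Nat.not_dvd_of_pos_of_lt (by omega) (by omega)
    simpa using h
  have h2 : (2 : ZMod N) ≠ 0 := by
    have h : ((2 : ℕ) : ZMod N) ≠ 0 := by
      rw [Ne, ZMod.natCast_eq_zero_iff]; exact Nat.not_dvd_of_pos_of_lt (by omega) (by omega)
    simpa using h
  obtain ⟨e₀, f, he₀, hf, hf'⟩ :=
    VanishingOrder.exists_tests (ZMod 7 × (ZMod N → VanishingOrder.Ty N n))
  have : NeZero e₀ := ⟨he₀.ne'⟩
  set Q : ℕ := N * (7 * (Fintype.card (ZMod N → VanishingOrder.Ty N n) *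
    Fintype.card (Fin 3 × Fin e₀))) with hQ
  have hQpos : 0 < Q := by
    rw [hQ]
    have := NeZero.pos N
    positivity
  have hQ8 : (0 : ℝ) < 8 * Q := by exact_mod_cast (by omega : 0 < 8 * Q)
  -- the hypergraph has at most `Q * (8 * 2 ^ n₀)` vertices
  refine ⟨(1 / (8 * Q)) ^ n, by positivity, fun n₀ => ?_⟩
  let Y : VanishingOrder.Sys N n (VanishingOrder.Vtx N n (Fin 3 × Fin e₀) (n₀ + 3)) :=
    VanishingOrder.sys f
  have hcard : #(univ.image Y.C) = Q * Fintype.card (VanishingOrder.Wt (n₀ + 3)) := by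
    rw [card_image_of_injective _ Y.C_inj, card_univ, VanishingOrder.card_Vtx]
  have hW := VanishingOrder.card_Wt n₀
  have hpow : n₀ < 2 ^ n₀ := Nat.lt_two_pow_self
  have hbig : n₀ + 1 < #(univ.image Y.C) := by
    rw [hcard]
    nlinarith
  have hedge : ∀ e ∈ VanishingOrder.edges Y, e ⊆ univ.image Y.C ∧
      ∃ s τ G, VanishingOrder.Good Y s τ G ∧ e = univ.image fun r => Y.C (G r) := by
    intro e he
    rw [VanishingOrder.edges, mem_filter, mem_powerset] at he
    exact he
  refine ⟨univ.image Y.C, VanishingOrder.edges Y, ?_, by omega, ?_, ?_⟩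
  · intro e he
    obtain ⟨hsub, s, τ, G, hG, rfl⟩ := hedge e he
    refine ⟨hsub, ?_⟩
    exact (card_image_of_injective univ (Y.C_inj.comp (hG.injective h1 h2))).trans
      (VanishingOrder.card_Rl n)
  · have hmin : (2 ^ n₀) ^ n ≤ minDeg 2 (univ.image Y.C) (VanishingOrder.edges Y) := by
      have hne : {d | ∃ S ⊆ univ.image Y.C, #S = 2 ∧
          d = degS (VanishingOrder.edges Y) S}.Nonempty := by
        obtain ⟨S, hS, hS2⟩ := exists_subset_card_eq (by omega : 2 ≤ #(univ.image Y.C))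
        exact ⟨_, S, hS, hS2, rfl⟩
      obtain ⟨S, hS, hS2, hd⟩ := Nat.sInf_mem hne
      rw [minDeg, hd]
      obtain ⟨a, b, hab, rfl⟩ := card_eq_two.mp hS2
      obtain ⟨U, -, rfl⟩ := mem_image.mp (hS (mem_insert_self a _))
      obtain ⟨V, -, rfl⟩ := mem_image.mp (hS (mem_insert_of_mem (mem_singleton_self b)))
      exact VanishingOrder.le_degS_pair f hf hf' h1 h2 hN hn (ne_of_apply_ne _ hab)
    have hle : #(univ.image Y.C) ≤ 8 * Q * 2 ^ n₀ := by
      rw [hcard]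
      calc Q * Fintype.card (VanishingOrder.Wt (n₀ + 3)) ≤ Q * (8 * 2 ^ n₀) :=
            Nat.mul_le_mul_left _ (by omega)
        _ = 8 * Q * 2 ^ n₀ := by ring
    have hle' : (#(univ.image Y.C) : ℝ) ≤ 8 * Q * 2 ^ n₀ := by exact_mod_cast hle
    have hmin' : ((2 : ℝ) ^ n₀) ^ n ≤ minDeg 2 (univ.image Y.C) (VanishingOrder.edges Y) := by
      exact_mod_cast hmin
    refine le_trans ?_ hmin'
    rw [Nat.add_sub_cancel, ← mul_pow]
    refine pow_le_pow_left₀ (by positivity) ?_ n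
    rw [one_div, inv_mul_le_iff₀ hQ8]
    exact hle'
  · intro V' E' hV' hE' hsub hc
    refine VanishingOrder.exists_vanishing Y h1 h2 V' E' ?_ (fun e he => (hedge e (hE' he)).2)
      hsub (by omega)
    intro c hcV
    obtain ⟨v, -, hv⟩ := mem_image.mp (hV' hcV)
    exact ⟨v, hv⟩
end

section
/- Let k ≥ 4 and let H be a (2,1^{k−2})-type k-graph with (2,1^{k−2})-partition A ∪ B_1 ∪ ⋯ ∪ B_{k−2}. Let σ = σ_A ⊕ σ_1 ⊕ ⋯ ⊕ σ_{k−2} be a cluster ordering respecting this partition, listing first A (under σ_A) and then B_1, …, B_{k−2} (under σ_1, …, σ_{k−2}). Suppose that for every 1 ≤ ℓ ≤ k−2 and every b ∈ B_ℓ, the ordering σ_A is a 1-vanishing order of the graph G_b on A with edge set {aa' : a, a' ∈ A and some edge of H contains {a, a', b}}. Then σ is a 2-vanishing order of H. -/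
/-!
In an edge `e`, a vertex of `B i` always occupies position `i + 3`: it is preceded by the two
vertices of `e ∩ A` and by one vertex from each `B j` with `j < i`. The two vertices of `e ∩ A`
occupy the positions `1` and `2`. So the set of positions of a pair `X ⊆ e` is independent of the
edge `e` containing `X` when `X` lies inside `A` (it is `{1, 2}`) or avoids `A`. If `X` consists
of `a ∈ A` and `b ∈ B i`, the position of `a` in `e` is the colour of `a` in the `1`-vanishing
colouring of `G_b`, which again does not depend on `e`. Colouring a pair by its positions in an
arbitrarily chosen edge containing it therefore works.
-/

open Finset Filter

variable {α : Type*} {β : Type*}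

/-- A colouring of the `ℓ`-sets exists as soon as the positions of an `ℓ`-set are the same in any two edges
containing it. -/
lemma exists_coloring_of_positions_agree [DecidableEq α] {ℓ : ℕ} {E : Finset (Finset α)}
    {σ : α → ℕ}
    (h : ∀ e ∈ E, ∀ e' ∈ E, ∀ X ⊆ e, X ⊆ e' → X.card = ℓ →
      X.image (rankIn e σ) = X.image (rankIn e' σ)) :
    ∃ φ : Finset α → Finset ℕ,
      ∀ e ∈ E, ∀ X ⊆ e, X.card = ℓ → φ X = X.image (rankIn e σ) := by
  classical
  refine ⟨fun X => if hX : ∃ e ∈ E, X ⊆ e then X.image (rankIn hX.choose σ) else ∅, ?_⟩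
  intro e he X hXe hX
  have hex : ∃ e ∈ E, X ⊆ e := ⟨e, he, hXe⟩
  simp only [dif_pos hex]
  exact h _ hex.choose_spec.1 e he X hex.choose_spec.2 hXe hX

/-- The position inside `e` of a vertex of `B i`: two vertices of `A` and one vertex of each
`B j` with `j ≤ i` are at or before it. -/
lemma rankIn_of_mem_part [DecidableEq α] {m : ℕ} {e A : Finset α} {B : Fin m → Finset α}
    {σ : α → ℕ}
    (hcov : ∀ x ∈ e, x ∈ A ∨ ∃ i, x ∈ B i)
    (hdisjAB : ∀ i, Disjoint A (B i))
    (hdisjBB : ∀ i j, i ≠ j → Disjoint (B i) (B j))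
    (hA : (e ∩ A).card = 2) (hB : ∀ i, (e ∩ B i).card = 1)
    (hAB : ∀ a ∈ A, ∀ i, ∀ b ∈ B i, σ a < σ b)
    (hBB : ∀ i j : Fin m, i < j → ∀ b ∈ B i, ∀ b' ∈ B j, σ b < σ b')
    {i : Fin m} {b : α} (hbe : b ∈ e) (hb : b ∈ B i) :
    rankIn e σ b = (i : ℕ) + 3 := by
  have hset : (e.filter fun y => σ y ≤ σ b)
      = (e ∩ A) ∪ (Finset.Iic i).biUnion fun j => e ∩ B j := by
    ext y
    simp only [mem_filter, mem_union, mem_inter, mem_biUnion, mem_Iic]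
    constructor
    · rintro ⟨hy, hle⟩
      rcases hcov y hy with h | ⟨j, hj⟩
      · exact Or.inl ⟨hy, h⟩
      · refine Or.inr ⟨j, ?_, hy, hj⟩
        by_contra hij
        exact absurd (hBB i j (not_le.mp hij) b hb y hj) (not_lt.mpr hle)
    · rintro (⟨hy, h⟩ | ⟨j, hji, hy, hj⟩)
      · exact ⟨hy, (hAB y h i b hb).le⟩
      · refine ⟨hy, ?_⟩
        rcases hji.lt_or_eq with hlt | rfl
        · exact (hBB j i hlt y hj b hb).le
        · -- `e ∩ B j` is a singleton, so `y` is `b` itself.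
          have := Finset.card_le_one.mp (hB j).le y (mem_inter.mpr ⟨hy, hj⟩) b
            (mem_inter.mpr ⟨hbe, hb⟩)
          rw [this]
  unfold rankIn
  rw [hset, card_union_of_disjoint, card_biUnion, hA]
  · simp only [hB, sum_const, Fin.card_Iic, smul_eq_mul, mul_one]
    omega
  · intro x _ y _ hxy
    exact (hdisjBB x y hxy).mono inter_subset_right inter_subset_right
  · rw [disjoint_biUnion_right]
    intro j _
    exact (hdisjAB j).mono inter_subset_right inter_subset_right

/-- The two vertices of an edge in `A` are its first two vertices. -/
lemma exists_rankIn_A [DecidableEq α] {m : ℕ} {e A : Finset α} {B : Fin m → Finset α}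
    {σ : α → ℕ}
    (hcov : ∀ x ∈ e, x ∈ A ∨ ∃ i, x ∈ B i)
    (hinj : Set.InjOn σ (e : Set α))
    (hA : (e ∩ A).card = 2)
    (hAB : ∀ a ∈ A, ∀ i, ∀ b ∈ B i, σ a < σ b) :
    ∃ a a', σ a < σ a' ∧ e ∩ A = {a, a'} ∧ rankIn e σ a = 1 ∧ rankIn e σ a' = 2 := by
  have hrank : ∀ x ∈ A, rankIn e σ x = ((e ∩ A).filter fun y => σ y ≤ σ x).card := by
    intro x hx
    unfold rankIn
    congr 1
    ext y
    simp only [mem_filter, mem_inter]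
    constructor
    · rintro ⟨hy, hle⟩
      refine ⟨⟨hy, ?_⟩, hle⟩
      rcases hcov y hy with h | ⟨j, hj⟩
      · exact h
      · exact absurd (hAB x hx j y hj) (not_lt.mpr hle)
    · rintro ⟨⟨hy, -⟩, hle⟩
      exact ⟨hy, hle⟩
  have hordered : ∃ a a', σ a < σ a' ∧ e ∩ A = {a, a'} := by
    obtain ⟨x, y, hxy, hs⟩ := card_eq_two.mp hA
    have hx : x ∈ e ∩ A := by simp [hs]
    have hy : y ∈ e ∩ A := by simp [hs]
    have hne : σ x ≠ σ y := fun h =>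
      hxy (hinj (mem_coe.mpr (mem_inter.mp hx).1) (mem_coe.mpr (mem_inter.mp hy).1) h)
    rcases hne.lt_or_gt with h | h
    · exact ⟨x, y, h, hs⟩
    · exact ⟨y, x, h, by rw [hs, pair_comm]⟩
  obtain ⟨a, a', hlt, hs⟩ := hordered
  have ha : a ∈ e ∩ A := by simp [hs]
  have ha' : a' ∈ e ∩ A := by simp [hs]
  have hne : a ≠ a' := fun h => by simp [h] at hlt
  refine ⟨a, a', hlt, hs, ?_, ?_⟩
  · rw [hrank a (mem_inter.mp ha).2, hs, filter_insert, filter_singleton]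
    simp [hlt.not_ge]
  · rw [hrank a' (mem_inter.mp ha').2, hs, filter_insert, filter_singleton]
    simp [hlt.le, hne]

/-- Let `H` be a `(2,1^{k-2})`-type `k`-graph with partition
`A ∪ B 0 ∪ ⋯ ∪ B (k-3)` and let `σ` be a cluster ordering listing first `A`, then
`B 0, …, B (k-3)`.  If for every `b ∈ B ℓ` the restriction of `σ` to `A` is a `1`-vanishing
order of the graph `G_b = {aa' : some edge of `H` contains {a, a', b}}`, then `σ` is a
`2`-vanishing order of `H`. -/
theorem stmt_13 {α : Type*} [DecidableEq α] (k : ℕ) (hk : 4 ≤ k)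
    (V : Finset α) (E : Finset (Finset α)) (hF : IsKGraph k V E)
    (A : Finset α) (B : Fin (k - 2) → Finset α)
    (hpart : V = A ∪ Finset.univ.biUnion fun i => B i)
    (hdisjAB : ∀ i, Disjoint A (B i))
    (hdisjBB : ∀ i j, i ≠ j → Disjoint (B i) (B j))
    (htype : ∀ e ∈ E, (e ∩ A).card = 2 ∧ ∀ i, (e ∩ B i).card = 1)
    (σ : α → ℕ) (hσ : IsOrdering V σ)
    (hAB : ∀ a ∈ A, ∀ i, ∀ b ∈ B i, σ a < σ b)
    (hBB : ∀ i j : Fin (k - 2), i < j → ∀ b ∈ B i, ∀ b' ∈ B j, σ b < σ b')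
    (h1v : ∀ i, ∀ b ∈ B i, ∃ φ : α → ℕ, (∀ a ∈ A, φ a = 1 ∨ φ a = 2) ∧
      ∀ a ∈ A, ∀ a' ∈ A, (∃ e ∈ E, a ∈ e ∧ a' ∈ e ∧ b ∈ e) → σ a < σ a' →
        φ a = 1 ∧ φ a' = 2) :
    IsVanishingOrder 2 V E σ := by
  have hcov : ∀ e ∈ E, ∀ x ∈ e, x ∈ A ∨ ∃ i, x ∈ B i := by
    intro e he x hx
    have := (hF e he).1 hx
    simpa [hpart] using this
  have hrankB : ∀ e ∈ E, ∀ i, ∀ b ∈ e, b ∈ B i → rankIn e σ b = (i : ℕ) + 3 :=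
    fun e he i b hbe hb => rankIn_of_mem_part (hcov e he) hdisjAB hdisjBB (htype e he).1
      (htype e he).2 hAB hBB hbe hb
  have hrankA : ∀ e ∈ E, ∃ a a', σ a < σ a' ∧ e ∩ A = {a, a'} ∧
      rankIn e σ a = 1 ∧ rankIn e σ a' = 2 := fun e he =>
    exists_rankIn_A (hcov e he) (hσ.injOn.mono (coe_subset.mpr (hF e he).1)) (htype e he).1 hAB
  -- Next to a vertex `b ∉ A`, the position of `a ∈ A` is its colour in `G_b`.
  have hmixed : ∀ e ∈ E, ∀ e' ∈ E, ∀ a ∈ A, ∀ i, ∀ b ∈ B i, a ∈ e → b ∈ e → a ∈ e' → b ∈ e' →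
      rankIn e σ a = rankIn e' σ a := by
    intro e he e' he' a ha i b hb hae hbe hae' hbe'
    obtain ⟨φ, -, hφ⟩ := h1v i b hb
    have key : ∀ f ∈ E, a ∈ f → b ∈ f → rankIn f σ a = φ a := by
      intro f hf haf hbf
      obtain ⟨x, y, hlt, hs, hx1, hy2⟩ := hrankA f hf
      have hx : x ∈ f ∩ A := by simp [hs]
      have hy : y ∈ f ∩ A := by simp [hs]
      rw [mem_inter] at hx hy
      obtain ⟨h1, h2⟩ := hφ x hx.2 y hy.2 ⟨f, hf, hx.1, hy.1, hbf⟩ hlt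
      have hmem : a ∈ ({x, y} : Finset α) := hs ▸ mem_inter.mpr ⟨haf, ha⟩
      rcases mem_insert.mp hmem with rfl | h
      · rw [hx1, h1]
      · rw [mem_singleton.mp h, hy2, h2]
    rw [key e he hae hbe, key e' he' hae' hbe']
  have hAA : ∀ e ∈ E, ∀ X ⊆ e, X.card = 2 → X ⊆ A → X.image (rankIn e σ) = {1, 2} := by
    intro e he X hXe hX hXA
    obtain ⟨x, y, -, hs, hx1, hy2⟩ := hrankA e he
    have hXeq : X = e ∩ A :=
      eq_of_subset_of_card_le (subset_inter hXe hXA) (by rw [hX, (htype e he).1])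
    rw [hXeq, hs, image_insert, image_singleton, hx1, hy2]
  refine ⟨hσ, exists_coloring_of_positions_agree ?_⟩
  intro e he e' he' X hXe hXe' hX
  by_cases hXA : X ⊆ A
  · rw [hAA e he X hXe hX hXA, hAA e' he' X hXe' hX hXA]
  · obtain ⟨b, hbX, hbA⟩ := not_subset.mp hXA
    obtain ⟨i, hb⟩ := (hcov e he b (hXe hbX)).resolve_left hbA
    refine image_congr fun x hx => ?_
    have hxX : x ∈ X := mem_coe.mp hx
    rcases hcov e he x (hXe hxX) with hxA | ⟨j, hxj⟩
    · exact hmixed e he e' he' x hxA i b hb (hXe hxX) (hXe hbX) (hXe' hxX) (hXe' hbX)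
    · rw [hrankB e he j x (hXe hxX) hxj, hrankB e' he' j x (hXe' hxX) hxj]
end

section
/- Let k ≥ 3 and let N be an integer with N − 1 ≥ (k−1)(k−2). Let J be a (k−1)-graph on vertex set [N] = {1,…,N} such that every pair of distinct vertices of [N] is contained in exactly one edge of J. Then there exists a surjection φ : E(J) → [N] such that φ(e) ∈ e for every e ∈ E(J). -/
/-!
The idea is to apply Hall's theorem to the vertex-edge incidence relation, matching every vertex to
its own edge. For a vertex `v`, the edges through `v` minus `v` cover the other `N - 1` vertices, so
`v` lies in at least `(N - 1) / (k - 2) ≥ k - 1` edges (`le_card_edges_through`), while an edge has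
only `k - 1` vertices. Double counting incidences then gives Hall's condition
(`exists_injective_edge`). The inverse of the matching, extended to unmatched edges by an arbitrary
choice of vertex, is the required surjection.
-/

open Finset Filter

variable {α : Type*} {β : Type*}

/-- The sets `e \ {v}`, for edges `e` through `v`, have size `k - 2` and cover the other `N - 1`
vertices; this bounds the degree of `v` from below. -/
theorem le_card_edges_through (k N : ℕ) (hk : 3 ≤ k) (hN : (k - 1) * (k - 2) ≤ N - 1)
    (J : Finset (Finset (Fin N))) (hJ : ∀ e ∈ J, e.card = k - 1)
    (hcov : ∀ x y : Fin N, x ≠ y → ∃ e ∈ J, x ∈ e ∧ y ∈ e) (v : Fin N) :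
    k - 1 ≤ (J.filter fun e => v ∈ e).card := by
  have hsub : (univ : Finset (Fin N)).erase v ⊆
      (J.filter fun e => v ∈ e).biUnion fun e => e.erase v := by
    intro y hy
    have hne := ne_of_mem_erase hy
    obtain ⟨e, he, hv, hye⟩ := hcov v y hne.symm
    exact mem_biUnion.2 ⟨e, mem_filter.2 ⟨he, hv⟩, mem_erase.2 ⟨hne, hye⟩⟩
  have hle := (card_le_card hsub).trans
    (card_biUnion_le_card_mul (J.filter fun e => v ∈ e) (fun e => e.erase v) (k - 2) (by
      intro e he
      obtain ⟨he, hv⟩ := mem_filter.1 he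
      rw [card_erase_of_mem hv, hJ e he]
      omega))
  rw [card_erase_of_mem (mem_univ v), card_univ, Fintype.card_fin] at hle
  exact Nat.le_of_mul_le_mul_right (hN.trans hle) (by omega)

/-- Hall's theorem for a hypergraph whose edges have at most `m` vertices and whose vertices have
degree at least `m`. -/
theorem exists_injective_edge {N m : ℕ} (hm : 0 < m) (J : Finset (Finset (Fin N)))
    (hJ : ∀ e ∈ J, e.card ≤ m) (hdeg : ∀ v, m ≤ (J.filter fun e => v ∈ e).card) :
    ∃ f : Fin N → Finset (Fin N), Function.Injective f ∧ ∀ v, f v ∈ J ∧ v ∈ f v := by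
  obtain ⟨f, hf, hmem⟩ := (Finset.all_card_le_biUnion_card_iff_exists_injective
    (fun v : Fin N => J.filter fun e => v ∈ e)).1 (by
      intro S
      refine Nat.le_of_mul_le_mul_right
        (card_mul_le_card_mul (fun v e => v ∈ e) (m := m) (n := m) ?_ ?_) hm
      · intro v hv
        refine (hdeg v).trans (card_le_card fun e he => ?_)
        exact mem_filter.2 ⟨mem_biUnion.2 ⟨v, hv, he⟩, (mem_filter.1 he).2⟩
      · intro e he
        obtain ⟨v, -, he⟩ := mem_biUnion.1 he
        refine (card_le_card fun x hx => ?_).trans (hJ e (mem_filter.1 he).1)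
        exact (mem_filter.1 hx).2)
  exact ⟨f, hf, fun v => mem_filter.1 (hmem v)⟩

/-- Let `k ≥ 3`, `N - 1 ≥ (k-1)(k-2)`, and let `J` be a `(k-1)`-graph on `[N]` in
which every pair of distinct vertices lies in exactly one edge.  Then there is a surjection
`φ : E(J) → [N]` with `φ(e) ∈ e` for every edge `e`. -/
theorem stmt_14 (k N : ℕ) (hk : 3 ≤ k) (hN : (k - 1) * (k - 2) ≤ N - 1)
    (J : Finset (Finset (Fin N))) (hJ : ∀ e ∈ J, e.card = k - 1)
    (hdes : ∀ x y : Fin N, x ≠ y → ∃! e, e ∈ J ∧ x ∈ e ∧ y ∈ e) :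
    ∃ φ : Finset (Fin N) → Fin N,
      (∀ e ∈ J, φ e ∈ e) ∧ ∀ v : Fin N, ∃ e ∈ J, φ e = v := by
  obtain ⟨f, hf, hmem⟩ := exists_injective_edge (m := k - 1) (by omega) J
    (fun e he => (hJ e he).le)
    (le_card_edges_through k N hk hN J hJ fun x y hxy => (hdes x y hxy).exists)
  have hpos : 0 < (k - 1) * (k - 2) := Nat.mul_pos (by omega) (by omega)
  have hφ : ∀ e : Finset (Fin N), ∃ w : Fin N, (e ∈ J → w ∈ e) ∧ ∀ v, f v = e → w = v := by
    intro e
    by_cases h : ∃ v, f v = e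
    · obtain ⟨v, rfl⟩ := h
      exact ⟨v, fun _ => (hmem v).2, fun u hu => (hf hu).symm⟩
    · by_cases he : e ∈ J
      · obtain ⟨w, hw⟩ := card_pos.1 (show 0 < e.card by rw [hJ e he]; omega)
        exact ⟨w, fun _ => hw, fun v hv => (h ⟨v, hv⟩).elim⟩
      · exact ⟨⟨0, by omega⟩, fun h' => (he h').elim, fun v hv => (h ⟨v, hv⟩).elim⟩
  choose φ hφ using hφ
  exact ⟨φ, fun e he => (hφ e).1 he, fun v => ⟨f v, (hmem v).1, (hφ (f v)).2 v rfl⟩⟩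
end

section
/- Let s > r ≥ 1 and m ≥ s − r be integers, let S be a set of s integers carrying a color c ∈ Z/mZ, and let R be an r-element subset of S. Then the set {φ_{T,R}(φ_{S,T}(c)) : T is an (r+1)-element subset of S with R ⊆ T} has exactly s − r elements. -/
/-!
The inversions of `σ_R ⊕ σ_{S∖R}` are exactly the pairs `i < j` with `i ∈ S ∖ R` and `j ∈ R`.
Write `N(A, B)` (`crossings A B`) for the number of pairs `i < j` with `i ∈ A`, `j ∈ B`, so that the color
shift from `S` to `R` is `N(S ∖ R, R)` (`inversions_oplusOrd`). For `T = R ∪ {x}` with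
`x ∈ Q = S ∖ R`, passing from `S` to `T` and then to `R` shifts the color by

  `N(Q ∖ {x}, R) + N(Q ∖ {x}, {x}) + N({x}, R) = N(Q, R) + #{i ∈ Q : i < x}`

(`inversions_add_inversions`). As `x` runs through `Q`, the last term takes the `s - r` values
`0, …, s - r - 1`, once each, and these are pairwise distinct modulo `m ≥ s - r`.
-/

open Finset Filter

variable {α : Type*} {β : Type*}

/-- The increasing ordering `σ_S` of a finite set `S` of integers: `x ↦ |{y ∈ S : y ≤ x}|`. -/
def incOrd (S : Finset ℤ) (x : ℤ) : ℕ := (S.filter fun y => y ≤ x).card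

/-- The sum `σ₁ ⊕ σ₂` of orderings of disjoint sets: equal to `σ₁` on `S₁` and to
`σ₂ + |S₁|` elsewhere. -/
def oplusOrd (S₁ : Finset ℤ) (σ₁ σ₂ : ℤ → ℕ) (x : ℤ) : ℕ :=
  if x ∈ S₁ then σ₁ x else σ₂ x + S₁.card

/-- `τ(σ)`: the number of inversions of the ordering `σ` of `S`, i.e. the number of pairs
`{i, j} ⊆ S` with `i < j` and `σ i > σ j`. -/
def inversions (S : Finset ℤ) (σ : ℤ → ℕ) : ℕ :=
  ((S ×ˢ S).filter fun p => p.1 < p.2 ∧ σ p.2 < σ p.1).card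

/-- The induced color `φ_{S,R}(c) = τ(σ_R ⊕ σ_{S∖R}) + c ∈ ℤ/mℤ` of a subset `R` of a set `S`
of integers colored by `c`. -/
def inducedColor (m : ℕ) (S R : Finset ℤ) (c : ZMod m) : ZMod m :=
  (inversions S (oplusOrd R (incOrd R) (incOrd (S \ R))) : ZMod m) + c

/-- The number of pairs `(i, j)` with `i ∈ A`, `j ∈ B` and `i < j`. -/
def crossings (A B : Finset ℤ) : ℕ := ∑ j ∈ B, (A.filter fun i => i < j).card

lemma incOrd_mono (S : Finset ℤ) {x y : ℤ} (h : x ≤ y) : incOrd S x ≤ incOrd S y :=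
  Finset.card_le_card fun z hz => by
    simp only [Finset.mem_filter] at hz ⊢
    exact ⟨hz.1, hz.2.trans h⟩

lemma incOrd_le (S : Finset ℤ) (x : ℤ) : incOrd S x ≤ S.card :=
  Finset.card_filter_le _ _

lemma incOrd_pos {S : Finset ℤ} {x : ℤ} (h : x ∈ S) : 0 < incOrd S x :=
  Finset.card_pos.2 ⟨x, by simp [h]⟩

/-- Both summands are increasing and all of `R` is placed before `S \ R`, so an inversion must
consist of a smaller element outside `R` and a larger element of `R`. -/
lemma inversions_oplusOrd {S R : Finset ℤ} (hRS : R ⊆ S) :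
    inversions S (oplusOrd R (incOrd R) (incOrd (S \ R))) = crossings (S \ R) R := by
  have h : ((S ×ˢ S).filter fun p => p.1 < p.2 ∧
      oplusOrd R (incOrd R) (incOrd (S \ R)) p.2 < oplusOrd R (incOrd R) (incOrd (S \ R)) p.1)
      = ((S \ R) ×ˢ R).filter fun p => p.1 < p.2 := by
    ext ⟨i, j⟩
    simp only [Finset.mem_filter, Finset.mem_product, Finset.mem_sdiff]
    simp only [oplusOrd]
    constructor
    · rintro ⟨⟨hi, hj⟩, hij, h⟩
      have h1 := incOrd_mono R hij.le
      have h2 := incOrd_mono (S \ R) hij.le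
      have h3 := incOrd_le R i
      split_ifs at h with hjR hiR hiR
      · omega
      · exact ⟨⟨⟨hi, hiR⟩, hjR⟩, hij⟩
      · omega
      · omega
    · rintro ⟨⟨⟨hi, hiR⟩, hjR⟩, hij⟩
      refine ⟨⟨hi, hRS hjR⟩, hij, ?_⟩
      have h1 := incOrd_le R j
      have h2 := incOrd_pos (Finset.mem_sdiff.2 ⟨hi, hiR⟩)
      rw [if_pos hjR, if_neg hiR]
      omega
  rw [inversions, h, crossings, Finset.card_filter, Finset.sum_product_right]
  simp only [Finset.card_filter]

/-- The shift of the color along `S ⊇ R ∪ {x} ⊇ R` is the direct shift along `S ⊇ R` plus the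
number of elements of `S \ R` below `x`. -/
lemma inversions_add_inversions {S R : Finset ℤ} (hRS : R ⊆ S) {x : ℤ} (hx : x ∈ S \ R) :
    inversions S (oplusOrd (insert x R) (incOrd (insert x R)) (incOrd (S \ insert x R))) +
      inversions (insert x R) (oplusOrd R (incOrd R) (incOrd (insert x R \ R)))
      = crossings (S \ R) R + ((S \ R).filter fun i => i < x).card := by
  obtain ⟨hxS, hxR⟩ := Finset.mem_sdiff.1 hx
  rw [inversions_oplusOrd (Finset.insert_subset hxS hRS),
    inversions_oplusOrd (Finset.subset_insert x R), Finset.insert_sdiff_cancel hxR]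
  simp only [crossings]
  rw [Finset.sum_insert hxR]
  have h1 : (S \ insert x R).filter (fun i => i < x) = (S \ R).filter fun i => i < x := by
    ext i
    simp only [Finset.mem_filter, Finset.mem_sdiff, Finset.mem_insert]
    grind
  have h2 (j : ℤ) : ((S \ R).filter fun i => i < j).card
      = ((S \ insert x R).filter fun i => i < j).card
        + (({x} : Finset ℤ).filter fun i => i < j).card := by
    rw [← Finset.card_union_of_disjoint]
    · congr 1
      ext i
      simp only [Finset.mem_filter, Finset.mem_sdiff, Finset.mem_insert, Finset.mem_union,
        Finset.mem_singleton]
      grind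
    · refine Finset.disjoint_filter_filter (Finset.disjoint_singleton_right.2 ?_)
      simp
  rw [h1, Finset.sum_congr rfl fun j _ => h2 j, Finset.sum_add_distrib]
  omega

lemma card_filter_lt_strictMonoOn (Q : Finset ℤ) :
    StrictMonoOn (fun x => (Q.filter fun i => i < x).card) (Q : Set ℤ) := by
  intro x hx y _ hxy
  refine Finset.card_lt_card (Finset.ssubset_iff_of_subset ?_ |>.2 ⟨x, ?_, ?_⟩)
  · intro i hi
    simp only [Finset.mem_filter] at hi ⊢
    exact ⟨hi.1, hi.2.trans hxy⟩
  · simp only [Finset.mem_filter]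
    exact ⟨hx, hxy⟩
  · simp

lemma card_filter_lt_lt_card {Q : Finset ℤ} {x : ℤ} (hx : x ∈ Q) :
    (Q.filter fun i => i < x).card < Q.card :=
  Finset.card_lt_card (Finset.filter_ssubset.2 ⟨x, hx, lt_irrefl x⟩)

lemma filter_powersetCard_succ {S R : Finset ℤ} {r : ℕ} (hRS : R ⊆ S) (hR : R.card = r) :
    ((S.powersetCard (r + 1)).filter fun T => R ⊆ T) = (S \ R).image fun x => insert x R := by
  ext T
  simp only [Finset.mem_filter, Finset.mem_powersetCard, Finset.mem_image, Finset.mem_sdiff]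
  constructor
  · rintro ⟨⟨hTS, hT⟩, hRT⟩
    have h1 : (T \ R).card = 1 := by
      rw [Finset.card_sdiff_of_subset hRT]
      omega
    obtain ⟨x, hx⟩ := Finset.card_eq_one.1 h1
    have hxT : x ∈ T \ R := by simp [hx]
    rw [Finset.mem_sdiff] at hxT
    refine ⟨x, ⟨hTS hxT.1, hxT.2⟩, ?_⟩
    rw [Finset.insert_eq, ← hx, Finset.sdiff_union_of_subset hRT]
  · rintro ⟨x, ⟨hxS, hxR⟩, rfl⟩
    exact ⟨⟨Finset.insert_subset hxS hRS, by rw [Finset.card_insert_of_notMem hxR, hR]⟩,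
      Finset.subset_insert x R⟩

/-- For `s > r ≥ 1` and `m ≥ s - r`, if `S` is a set of `s` integers with color
`c ∈ ℤ/mℤ` and `R ⊆ S` has `r` elements, then the set
`{φ_{T,R}(φ_{S,T}(c)) : R ⊆ T ∈ S^{(r+1)}}` has exactly `s - r` elements. -/
theorem stmt_15 (s r m : ℕ) (hr : 1 ≤ r) (hrs : r < s) (hm : s - r ≤ m)
    (S : Finset ℤ) (hS : S.card = s) (c : ZMod m)
    (R : Finset ℤ) (hRS : R ⊆ S) (hR : R.card = r) :
    (((S.powersetCard (r + 1)).filter fun T => R ⊆ T).image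
        fun T => inducedColor m T R (inducedColor m S T c)).card = s - r := by
  have hQ : (S \ R).card = s - r := by rw [Finset.card_sdiff_of_subset hRS, hS, hR]
  rw [filter_powersetCard_succ hRS hR, Finset.image_image, Finset.card_image_of_injOn, hQ]
  have key {x : ℤ} (hx : x ∈ S \ R) :
      inducedColor m (insert x R) R (inducedColor m S (insert x R) c)
        = (((S \ R).filter fun i => i < x).card : ZMod m)
          + ((crossings (S \ R) R : ZMod m) + c) := by
    have h := congrArg (Nat.cast : ℕ → ZMod m) (inversions_add_inversions hRS hx)
    push_cast at h
    simp only [inducedColor]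
    linear_combination h
  intro x hx y hy hxy
  rw [Finset.mem_coe] at hx hy
  simp only [Function.comp_apply] at hxy
  rw [key hx, key hy] at hxy
  have hmod := (ZMod.natCast_eq_natCast_iff' _ _ _).1 (add_right_cancel hxy)
  have hlx := card_filter_lt_lt_card hx
  have hly := card_filter_lt_lt_card hy
  rw [Nat.mod_eq_of_lt (by omega), Nat.mod_eq_of_lt (by omega)] at hmod
  exact (card_filter_lt_strictMonoOn (S \ R)).injOn hx hy hmod
end

section
/- Let m > k > ℓ ≥ 2 be integers. Let F_1, …, F_s be an enumeration of all k-graphs on vertex set [m] with minimum ℓ-degree at least C(m−ℓ−1, k−ℓ−1) + 1, and let F_{m,ℓ}^{(k)} be their tensor product: the k-graph with vertex set [m]^s in which k vertices form an edge if and only if for every 1 ≤ i ≤ s, the i-th coordinates of these k vertices form an edge of F_i. Then F_{m,ℓ}^{(k)} has no ℓ-vanishing order. -/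
/-!
The threshold `C(m-ℓ-1, k-ℓ-1)` is the largest number of `k`-sets through a fixed `ℓ`-set `S` that
can all pass through one further vertex `c`. So in every member of the family, each `ℓ`-set `S` and
each `c ∉ S` admit an edge containing `S` and avoiding `c` (`exists_edge_avoiding`). Edges chosen
in the individual factors can be glued to an edge of the tensor product (`exists_tensor_edge`).

Given an ordering `σ` of the product, let `v₁` be its first vertex, and `v₂` the first vertex that
differs from `v₁` in every coordinate. Choose an edge `e ∋ v₁, v₂` and an `ℓ`-set `X` with
`v₂ ∈ X ⊆ e \ {v₁}`. In `e`, no vertex of `X` has position `1`, since `v₁` precedes them all.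
On the other hand there is an edge `e' ⊇ X` which in each coordinate avoids the entry of `v₁`;
by the choice of `v₂`, no vertex of `e'` precedes `v₂`, so `v₂` has position `1` in `e'`. Hence
the positions of `X` in `e` and in `e'` differ, and no coloring `φ` can exist.
-/

open Finset Filter

variable {α : Type*} {β : Type*}

/-- The edge set of the tensor product `F_{m,ℓ}^{(k)}` of the family `Fam`: the vertices are
tuples in `Fin s → Fin m`, and `k` vertices form an edge iff for every index `i` their `i`-th
coordinates form an edge of `Fam i`. -/
def tensorE (k m s : ℕ) (Fam : Fin s → Finset (Finset (Fin m))) :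
    Finset (Finset (Fin s → Fin m)) :=
  ((Finset.univ : Finset (Fin s → Fin m)).powersetCard k).filter
    fun e => ∀ i, e.image (fun v => v i) ∈ Fam i

/-- `Fam` enumerates (without repetition) all `k`-graphs on the vertex set `Fin m` with minimum
`ℓ`-degree at least `C(m-ℓ-1, k-ℓ-1) + 1`. -/
def EnumeratesBig (k ℓ m s : ℕ) (Fam : Fin s → Finset (Finset (Fin m))) : Prop :=
  Function.Injective Fam ∧
    ∀ E : Finset (Finset (Fin m)),
      ((∀ e ∈ E, e.card = k) ∧
        (m - ℓ - 1).choose (k - ℓ - 1) + 1 ≤ minDeg ℓ (Finset.univ : Finset (Fin m)) E)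
      ↔ ∃ i, Fam i = E

lemma degS_ge_of_minDeg {ℓ m d : ℕ} {E : Finset (Finset (Fin m))}
    (h : d ≤ minDeg ℓ (Finset.univ : Finset (Fin m)) E) (S : Finset (Fin m)) (hS : S.card = ℓ) :
    d ≤ degS E S :=
  h.trans (Nat.sInf_le ⟨S, Finset.subset_univ _, hS, rfl⟩)

/-- An `ℓ`-set of degree more than `C(m-ℓ-1, k-ℓ-1)` lies in an edge avoiding any given vertex
outside it, because only `C(m-ℓ-1, k-ℓ-1)` sets of size `k` contain that vertex as well. -/
lemma exists_edge_avoiding {k ℓ m : ℕ} {E : Finset (Finset (Fin m))}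
    (hE : ∀ e ∈ E, e.card = k) (S : Finset (Fin m)) (hS : S.card = ℓ)
    (hd : (m - ℓ - 1).choose (k - ℓ - 1) + 1 ≤ degS E S) (c : Fin m) (hc : c ∉ S) :
    ∃ f ∈ E, S ⊆ f ∧ c ∉ f := by
  by_contra! hcon
  have hcard : (insert c S).card = ℓ + 1 := by rw [Finset.card_insert_of_notMem hc, hS]
  have hle : degS E S ≤ (Finset.powersetCard (k - ℓ - 1) (insert c S)ᶜ).card := by
    unfold degS
    have hsub : ∀ e ∈ E.filter (fun e => S ⊆ e), e ∈ E ∧ insert c S ⊆ e := by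
      intro e he
      rw [Finset.mem_filter] at he
      exact ⟨he.1, Finset.insert_subset (hcon e he.1 he.2) he.2⟩
    refine Finset.card_le_card_of_injOn (fun e => e \ insert c S) ?_ ?_
    · intro e he
      obtain ⟨h1, h2⟩ := hsub e he
      rw [Finset.mem_coe, Finset.mem_powersetCard]
      refine ⟨fun x hx => ?_, ?_⟩
      · rw [Finset.mem_compl]
        exact (Finset.mem_sdiff.1 hx).2
      · rw [Finset.card_sdiff_of_subset h2, hE e h1, hcard]
        omega
    · intro a ha b hb hab
      have h1 := (hsub a ha).2
      have h2 := (hsub b hb).2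
      simp only at hab
      rw [← Finset.sdiff_union_of_subset h1, ← Finset.sdiff_union_of_subset h2, hab]
  rw [Finset.card_powersetCard, Finset.card_compl, hcard, Fintype.card_fin, ← Nat.sub_sub] at hle
  omega

/-- The complete `k`-graph on `m > k` vertices satisfies the degree condition, so the family is
nonempty. -/
lemma complete_minDeg {k ℓ m : ℕ} (hℓk : ℓ < k) (hkm : k < m) :
    (m - ℓ - 1).choose (k - ℓ - 1) + 1 ≤ minDeg ℓ (Finset.univ : Finset (Fin m))
      (Finset.powersetCard k (Finset.univ : Finset (Fin m))) := by
  unfold minDeg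
  refine le_csInf ?_ ?_
  · obtain ⟨S, hS, hc⟩ := Finset.exists_subset_card_eq (s := (Finset.univ : Finset (Fin m)))
      (n := ℓ) (by rw [Finset.card_univ, Fintype.card_fin]; omega)
    exact ⟨_, S, hS, hc, rfl⟩
  · rintro d ⟨S, -, hS, rfl⟩
    have h1 : (Finset.powersetCard (k - ℓ) Sᶜ).card ≤
        degS (Finset.powersetCard k (Finset.univ : Finset (Fin m))) S := by
      unfold degS
      refine Finset.card_le_card_of_injOn (fun T => T ∪ S) ?_ ?_
      · intro T hT
        rw [Finset.mem_coe, Finset.mem_powersetCard] at hT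
        have hd : Disjoint T S := by
          rw [← Finset.subset_compl_iff_disjoint_right]; exact hT.1
        simp only [Finset.mem_coe, Finset.mem_filter, Finset.mem_powersetCard,
          Finset.subset_univ, true_and]
        refine ⟨?_, Finset.subset_union_right⟩
        rw [Finset.card_union_of_disjoint hd, hT.2, hS]
        omega
      · intro T hT U hU hTU
        rw [Finset.mem_coe, Finset.mem_powersetCard,
          Finset.subset_compl_iff_disjoint_right] at hT hU
        simp only at hTU
        rw [← Finset.union_sdiff_cancel_right hT.1, ← Finset.union_sdiff_cancel_right hU.1, hTU]
    rw [Finset.card_powersetCard, Finset.card_compl, hS, Fintype.card_fin] at h1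
    refine le_trans ?_ h1
    obtain ⟨a, ha⟩ : ∃ a, m - ℓ = a + 1 := ⟨m - ℓ - 1, by omega⟩
    obtain ⟨b, hb⟩ : ∃ b, k - ℓ = b + 1 := ⟨k - ℓ - 1, by omega⟩
    rw [ha, hb, Nat.choose_succ_succ]
    have hpos : 0 < a.choose (b + 1) := Nat.choose_pos (by omega)
    simp only [Nat.add_sub_cancel, Nat.succ_eq_add_one]
    omega

/-- Let `Y` be a set of vertices that are pairwise distinct in every coordinate. Edges `f i` of the
factors which contain the `i`-th coordinates of `Y` glue to an edge of the tensor product that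
contains `Y` and whose `i`-th coordinates lie in `f i`: enumerate the remaining elements of each
`f i` and let the `j`-th new vertex collect the `j`-th of them in every coordinate. -/
lemma exists_tensor_edge {k m s : ℕ} (hs : 0 < s) {Fam : Fin s → Finset (Finset (Fin m))}
    (Y : Finset (Fin s → Fin m))
    (hY : ∀ i, Set.InjOn (fun v : Fin s → Fin m => v i) Y)
    (f : Fin s → Finset (Fin m)) (hf : ∀ i, f i ∈ Fam i) (hfk : ∀ i, (f i).card = k)
    (hYf : ∀ i, ∀ v ∈ Y, v i ∈ f i) :
    ∃ e ∈ tensorE k m s Fam, Y ⊆ e ∧ ∀ v ∈ e, ∀ i, v i ∈ f i := by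
  have hsub : ∀ i, Y.image (fun v => v i) ⊆ f i := fun i => Finset.image_subset_iff.2 (hYf i)
  have hYc : ∀ i, (Y.image (fun v => v i)).card = Y.card := fun i =>
    Finset.card_image_of_injOn (hY i)
  have hc : ∀ i, (f i \ Y.image (fun v => v i)).card = k - Y.card := fun i => by
    rw [Finset.card_sdiff_of_subset (hsub i), hfk, hYc]
  have hYk : Y.card ≤ k := by
    rw [← hYc ⟨0, hs⟩, ← hfk ⟨0, hs⟩]; exact Finset.card_le_card (hsub _)
  let g : Fin (k - Y.card) → Fin s → Fin m := fun j i =>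
    (f i \ Y.image (fun v => v i)).orderEmbOfFin (hc i) j
  have himg : ∀ i, (Y ∪ Finset.univ.image g).image (fun v => v i) = f i := by
    intro i
    have h2 : (Finset.univ.image g).image (fun v => v i) = f i \ Y.image (fun v => v i) := by
      rw [Finset.image_image]
      exact Finset.image_orderEmbOfFin_univ _ (hc i)
    rw [Finset.image_union, h2, Finset.union_sdiff_of_subset (hsub i)]
  refine ⟨Y ∪ Finset.univ.image g, ?_, Finset.subset_union_left, ?_⟩
  · unfold tensorE
    rw [Finset.mem_filter, Finset.mem_powersetCard]
    refine ⟨⟨Finset.subset_univ _, le_antisymm ?_ ?_⟩, fun i => by rw [himg]; exact hf i⟩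
    · refine (Finset.card_union_le _ _).trans ?_
      have := Finset.card_image_le (s := (Finset.univ : Finset (Fin (k - Y.card)))) (f := g)
      rw [Finset.card_univ, Fintype.card_fin] at this
      omega
    · calc k = ((Y ∪ Finset.univ.image g).image fun v => v ⟨0, hs⟩).card := by rw [himg, hfk]
        _ ≤ _ := Finset.card_image_le
  · intro v hv i
    rw [← himg i]
    exact Finset.mem_image_of_mem (fun v : Fin s → Fin m => v i) hv

/-- For `m > k > ℓ ≥ 2`, the tensor product `F_{m,ℓ}^{(k)}` of all `m`-vertex
`k`-graphs with minimum `ℓ`-degree at least `C(m-ℓ-1, k-ℓ-1) + 1` has no `ℓ`-vanishing order. -/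
theorem stmt_16 (k ℓ m s : ℕ) (hℓ : 2 ≤ ℓ) (hℓk : ℓ < k) (hkm : k < m)
    (Fam : Fin s → Finset (Finset (Fin m))) (hFam : EnumeratesBig k ℓ m s Fam) :
    ¬ ∃ σ : (Fin s → Fin m) → ℕ,
      IsVanishingOrder ℓ (Finset.univ : Finset (Fin s → Fin m)) (tensorE k m s Fam) σ := by
  rintro ⟨σ, ⟨hbij, φ, hφ⟩⟩
  have hσ : ∀ x y, σ x = σ y → x = y := fun x y h =>
    hbij.injOn (by simp) (by simp) h
  have hk : ∀ i, ∀ e ∈ Fam i, e.card = k := fun i => ((hFam.2 (Fam i)).2 ⟨i, rfl⟩).1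
  have hd : ∀ i S, S.card = ℓ → (m - ℓ - 1).choose (k - ℓ - 1) + 1 ≤ degS (Fam i) S :=
    fun i S hS => degS_ge_of_minDeg ((hFam.2 (Fam i)).2 ⟨i, rfl⟩).2 S hS
  have hs : 0 < s := by
    obtain ⟨i, -⟩ := (hFam.2 (Finset.powersetCard k Finset.univ)).1
      ⟨fun e he => (Finset.mem_powersetCard.1 he).2, complete_minDeg hℓk hkm⟩
    exact i.pos
  have : Nontrivial (Fin m) := Fin.nontrivial_iff_two_le.2 (by omega)
  obtain ⟨v₁, -, hv₁⟩ := Finset.exists_min_image (Finset.univ : Finset (Fin s → Fin m)) σ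
    ⟨fun _ => ⟨0, by omega⟩, Finset.mem_univ _⟩
  obtain ⟨v₂, hv₂mem, hv₂⟩ := Finset.exists_min_image
    ((Finset.univ : Finset (Fin s → Fin m)).filter fun v => ∀ i, v i ≠ v₁ i) σ
    (by
      choose w hw using fun i => exists_ne (v₁ i)
      exact ⟨w, by simpa using hw⟩)
  have hne : ∀ i, v₂ i ≠ v₁ i := (Finset.mem_filter.1 hv₂mem).2
  have hne' : v₂ ≠ v₁ := fun h => hne ⟨0, hs⟩ (by rw [h])
  have hpair : ∀ i, ∃ f ∈ Fam i, v₁ i ∈ f ∧ v₂ i ∈ f := by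
    intro i
    obtain ⟨S, hsub, hS⟩ := Finset.exists_superset_card_eq (s := {v₁ i, v₂ i}) (n := ℓ)
      (Finset.card_le_two.trans hℓ) (by rw [Fintype.card_fin]; omega)
    have hpos : 0 < degS (Fam i) S := by have := hd i S hS; omega
    obtain ⟨f, hf⟩ := Finset.card_pos.1 hpos
    rw [Finset.mem_filter] at hf
    exact ⟨f, hf.1, hf.2 (hsub (by simp)), hf.2 (hsub (by simp))⟩
  choose f hfF hf1 hf2 using hpair
  obtain ⟨e, heE, hYe, -⟩ := exists_tensor_edge hs {v₁, v₂}
    (by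
      intro i x hx y hy hxy
      have h1 := hne i
      simp only [Finset.coe_insert, Finset.coe_singleton, Set.mem_insert_iff,
        Set.mem_singleton_iff] at hx hy
      rcases hx with rfl | rfl <;> rcases hy with rfl | rfl <;> simp_all)
    f hfF (fun i => hk i _ (hfF i))
    (by
      intro i v hv
      rw [Finset.mem_insert, Finset.mem_singleton] at hv
      rcases hv with rfl | rfl
      exacts [hf1 i, hf2 i])
  have h1e : v₁ ∈ e := hYe (by simp)
  have h2e : v₂ ∈ e := hYe (by simp)
  have heE' := heE
  unfold tensorE at heE'
  rw [Finset.mem_filter, Finset.mem_powersetCard] at heE'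
  obtain ⟨⟨-, hek⟩, heF⟩ := heE'
  have hinj : ∀ i, Set.InjOn (fun v : Fin s → Fin m => v i) e := fun i =>
    Finset.card_image_iff.1 ((hk i _ (heF i)).trans hek.symm)
  obtain ⟨X, h2X, hXe, hX⟩ := Finset.exists_subsuperset_card_eq (s := {v₂})
    (t := e.erase v₁) (n := ℓ)
    (Finset.singleton_subset_iff.2 (Finset.mem_erase.2 ⟨hne', h2e⟩))
    (by rw [Finset.card_singleton]; omega)
    (by rw [Finset.card_erase_of_mem h1e, hek]; omega)
  rw [Finset.singleton_subset_iff] at h2X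
  have hXe' : X ⊆ e := hXe.trans (Finset.erase_subset _ _)
  have hXinj : ∀ i, Set.InjOn (fun v : Fin s → Fin m => v i) X := fun i =>
    (hinj i).mono (by exact_mod_cast hXe')
  have havoid : ∀ i, ∃ f ∈ Fam i, X.image (fun v => v i) ⊆ f ∧ v₁ i ∉ f := by
    intro i
    have hc : (X.image (fun v => v i)).card = ℓ := by
      rw [Finset.card_image_of_injOn (hXinj i), hX]
    refine exists_edge_avoiding (hk i) _ hc (hd i _ hc) _ ?_
    intro hmem
    obtain ⟨x, hx, hxi⟩ := Finset.mem_image.1 hmem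
    exact (Finset.mem_erase.1 (hXe hx)).1 (hinj i (hXe' hx) h1e hxi)
  choose f' hf'F hf'X hf'1 using havoid
  obtain ⟨e', he'E, hXe'', he'f⟩ := exists_tensor_edge hs X hXinj f' hf'F
    (fun i => hk i _ (hf'F i)) (fun i v hv => hf'X i (Finset.mem_image_of_mem _ hv))
  have hrank' : rankIn e' σ v₂ = 1 := by
    unfold rankIn
    rw [Finset.card_eq_one]
    refine ⟨v₂, Finset.eq_singleton_iff_unique_mem.2 ⟨?_, ?_⟩⟩
    · exact Finset.mem_filter.2 ⟨hXe'' h2X, le_rfl⟩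
    · intro y hy
      obtain ⟨hy, hle⟩ := Finset.mem_filter.1 hy
      refine hσ _ _ (le_antisymm hle (hv₂ y ?_))
      exact Finset.mem_filter.2
        ⟨Finset.mem_univ _, fun i h => hf'1 i (by rw [← h]; exact he'f y hy i)⟩
  have hrank : ∀ x ∈ X, rankIn e σ x ≠ 1 := by
    intro x hx h
    unfold rankIn at h
    refine (Finset.mem_erase.1 (hXe hx)).1 (Finset.card_le_one.1 h.le _ ?_ _ ?_)
    · exact Finset.mem_filter.2 ⟨hXe' hx, le_rfl⟩
    · exact Finset.mem_filter.2 ⟨h1e, hv₁ x (Finset.mem_univ _)⟩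
  have hEq : X.image (rankIn e σ) = X.image (rankIn e' σ) :=
    (hφ e heE X hXe' hX).symm.trans (hφ e' he'E X hXe'' hX)
  have hone : 1 ∈ X.image (rankIn e' σ) := Finset.mem_image.2 ⟨v₂, h2X, hrank'⟩
  rw [← hEq] at hone
  obtain ⟨x, hx, hx1⟩ := Finset.mem_image.1 hone
  exact hrank x hx hx1
end
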